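/- Let G = ⟨S | R⟩ be a group with a C'(1/6) small cancellation presentation over a finite set S, where each r ∈ R is cyclically reduced and no word in R can be obtained from any other via cyclic conjugation and/or inversion. Suppose there exist constants d > 1, C ≥ 0 and an infinite subset I ⊆ ℕ such that for each n ∈ I the number of relators r ∈ R with n − C ≤ |r| ≤ n is greater than d^n. Then the Cayley graph Cay(G,S) admits exponentially many fat bigons. -/

import Mathlib

/-!
The bigons are the relators themselves: a relator `r` labels a loop of the Cayley graph through the
basepoint, its two halves are paths from the basepoint to the opposite vertex `antipode R r`, and
exponentially many relators give exponentially many opposite vertices. The constant `s` works as the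
radius around the endpoints. Two facts about `C'(1/6)` presentations are needed.

* `rel_isometry`: relators are isometrically embedded in the Cayley graph. Hence a point of one half
  and a point of the other half, both at distance more than `s` from the endpoints, are at distance
  more than `s` (`isBigonAt_antipode`).
* `geo_arc`: a geodesic joining two points of a relator is one of the two arcs of the relator. Hence
  two relators with the same opposite vertex share a subword that is half of one of them, which is
  too long for a piece, so that they coincide (`antipode_inj`).

The first fact follows from the second. For the second, one usually takes a reduced van Kampen diagram
bounded by the geodesic and the arc, and counts curvature. The diagrams are replaced here by a purely
combinatorial object. A `Region` is a word of minimal area, cut into segments, each of which reads a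
part of a relator or of the geodesic side. Starting from it, letters are matched one at a time:
`peel` says that a given letter of a word of area at most `k` either cancels against another letter,
splitting the word into two words of total area at most `k`, or lies on a relator whose removal
decreases the area. Induction on the area and on the length of the word then yields a list of cells
(`Tiling`), a cell being an interval along which two faces, or a face and the geodesic side,
meet. Euler's formula takes the form of an upper bound on the number of cells in terms of the number
of faces and of segments (`main_tiling`).

By `C'(1/6)` a cell between two faces covers less than a sixth of either, and because the outer side is
geodesic, a cell along that side covers at most half of a face. Weighing the cells around each face
(`face_wt`) and comparing with the upper bound shows that, once common parts of the
geodesic and the arc are cancelled, nothing of the arc remains (`no_one_cell`).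
-/

open SimpleGraph

/-- A graph has uniformly bounded degree if there is a uniform finite bound on
the cardinality of all neighbour sets. -/
def BddDegree {V : Type*} (G : SimpleGraph V) : Prop :=
  ∃ D : ℕ, ∀ v : V, (G.neighborSet v).encard ≤ D

/-- A walk is geodesic if its length realizes the graph distance between its endpoints. -/
def SimpleGraph.Walk.IsGeodesic {V : Type*} {G : SimpleGraph V} {x y : V}
    (w : G.Walk x y) : Prop :=
  w.length = G.dist x y

/-- A graph is `δ`-hyperbolic if each side of every geodesic triangle is contained in the
closed `δ`-neighbourhood of the union of the other two sides. -/
def GraphHyperbolic {V : Type*} (G : SimpleGraph V) (δ : ℝ) : Prop :=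
  ∀ ⦃a b c : V⦄ (γ₁ : G.Walk a b) (γ₂ : G.Walk b c) (γ₃ : G.Walk c a),
    γ₁.IsGeodesic → γ₂.IsGeodesic → γ₃.IsGeodesic →
      ∀ u ∈ γ₁.support, ∃ v, (v ∈ γ₂.support ∨ v ∈ γ₃.support) ∧ (G.dist u v : ℝ) ≤ δ

/-- `x` admits an `(L,s,C)`-bigon with respect to the basepoint `x₀`: two paths from `x₀`
to `x`, each of length at most `L·d(x₀,x)`, such that any vertex of the first path outside
the `C`-neighbourhood of `{x₀, x}` is at distance more than `s` from any vertex of the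
second path outside that neighbourhood. -/
def IsBigonAt {V : Type*} (G : SimpleGraph V) (x₀ : V) (L s C : ℝ) (x : V) : Prop :=
  ∃ α₁ α₂ : G.Walk x₀ x,
    ((α₁.length : ℝ) ≤ L * G.dist x₀ x) ∧ ((α₂.length : ℝ) ≤ L * G.dist x₀ x) ∧
    ∀ u ∈ α₁.support, ∀ v ∈ α₂.support,
      (C < (G.dist x₀ u : ℝ) ∧ C < (G.dist x u : ℝ)) →
      (C < (G.dist x₀ v : ℝ) ∧ C < (G.dist x v : ℝ)) →
      s < (G.dist u v : ℝ)

/-- The set `B^X(L,s,C)` of vertices admitting an `(L,s,C)`-bigon. -/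
def bigonSet {V : Type*} (G : SimpleGraph V) (x₀ : V) (L s C : ℝ) : Set V :=
  {x | IsBigonAt G x₀ L s C x}

/-- The closed ball of radius `n` about `x` in the graph metric. -/
def gBall {V : Type*} (G : SimpleGraph V) (x : V) (n : ℕ) : Set V :=
  {v | G.dist x v ≤ n}

/-- `X` has exponentially many fat bigons at `x₀`. -/
def HasExpManyFatBigons {V : Type*} (G : SimpleGraph V) (x₀ : V) : Prop :=
  ∃ s₀ c L : ℝ, 0 ≤ s₀ ∧ 1 < c ∧ 1 < L ∧
    ∀ s : ℝ, s₀ ≤ s → ∃ C : ℝ, 0 ≤ C ∧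
      {n : ℕ | (c ^ n : ℝ) ≤ ((bigonSet G x₀ L s C ∩ gBall G x₀ n).ncard : ℝ)}.Infinite

/-- `X` has no fat bigons at `x₀`. -/
def HasNoFatBigons {V : Type*} (G : SimpleGraph V) (x₀ : V) : Prop :=
  ∀ L : ℝ, 1 ≤ L → ∃ s : ℝ, 0 ≤ s ∧ ∀ C : ℝ, 0 ≤ C →
    ∃ R : ℕ, ∀ x ∈ bigonSet G x₀ L s C, G.dist x₀ x ≤ R

/-- A coarse embedding of the graph `G` into the graph `H`, with multiplicative constant `K`
and compression function `ρ`. -/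
def IsCoarseEmbedding {V W : Type*} (G : SimpleGraph V) (H : SimpleGraph W)
    (f : V → W) (K : ℝ) (ρ : ℕ → ℕ) : Prop :=
  1 ≤ K ∧ Filter.Tendsto ρ Filter.atTop Filter.atTop ∧
    ∀ x y : V, (ρ (G.dist x y) : ℝ) ≤ (H.dist (f x) (f y) : ℝ) ∧
      (H.dist (f x) (f y) : ℝ) ≤ K * (G.dist x y : ℝ)

/-- The Cayley graph of a group with respect to a (symmetric) set `S`. -/
def cayleyGraph (G : Type*) [Group G] (S : Set G) : SimpleGraph G :=
  SimpleGraph.fromRel (fun x y => x⁻¹ * y ∈ S)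

/-- The Cayley graph of `G` w.r.t. the basepoint `1` has exponential growth:
`|B_n(1)|^(1/n)` converges to a limit `> 1`. -/
def HasExpGrowth {V : Type*} (G : SimpleGraph V) (x₀ : V) : Prop :=
  ∃ a : ℝ, 1 < a ∧
    Filter.Tendsto (fun n : ℕ => ((gBall G x₀ n).ncard : ℝ) ^ ((n : ℝ)⁻¹))
      Filter.atTop (nhds a)

/-- `Div_X(n) ≤ M`: for all vertices `a b` with `d(a,b) ≤ n` and every `c ∉ {a, b}`, there is
a path from `a` to `b` of length at most `M` avoiding the ball around `c` of radius
`(1/2)·d(c,{a,b}) − 2`. -/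
def DivLE {V : Type*} (G : SimpleGraph V) (n : ℕ) (M : ℝ) : Prop :=
  ∀ a b c : V, G.dist a b ≤ n → c ≠ a → c ≠ b →
    ∃ w : G.Walk a b, (w.length : ℝ) ≤ M ∧
      ∀ u ∈ w.support, ((min (G.dist c a) (G.dist c b) : ℝ)) / 2 - 2 < (G.dist c u : ℝ)

/-- A group (given as a graph) is one-ended. -/
def OneEnded {V : Type*} (G : SimpleGraph V) : Prop :=
  ∃! e, e ∈ G.end

section SmallCancellation

variable {α : Type*} [DecidableEq α]

/-- The length of the reduced word representing an element of the free group. -/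
def wordLength (w : FreeGroup α) : ℕ := w.toWord.length

/-- `p` is an initial subword (prefix) of the reduced word of `r`. -/
def IsWordPrefix (p r : FreeGroup α) : Prop :=
  wordLength p + wordLength (p⁻¹ * r) = wordLength r

/-- A reduced word is cyclically reduced if it does not start with a letter and end with the
inverse of the same letter. -/
def IsCyclicallyReduced (r : FreeGroup α) : Prop :=
  ∀ (x : α × Bool) (l : List (α × Bool)), r.toWord ≠ x :: (l ++ [(x.1, !x.2)])

/-- `w` is a cyclic conjugate of `r`: `r = u·v` and `w = v·u` with no cancellation. -/
def IsCyclicConj (w r : FreeGroup α) : Prop :=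
  ∃ u v : FreeGroup α, r = u * v ∧ w = v * u ∧ wordLength u + wordLength v = wordLength r

/-- The symmetrization `R*` of a set of relators: the closure of `R` under cyclic
conjugation and inversion. -/
def symmetrize (R : Set (FreeGroup α)) : Set (FreeGroup α) :=
  {w | ∃ r ∈ R, IsCyclicConj w r ∨ IsCyclicConj w r⁻¹}

/-- A piece (with respect to `R`): a common initial subword of two distinct elements of the
symmetrization `R*`. -/
def IsPiece (R : Set (FreeGroup α)) (p : FreeGroup α) : Prop :=
  ∃ r₁ ∈ symmetrize R, ∃ r₂ ∈ symmetrize R,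
    r₁ ≠ r₂ ∧ IsWordPrefix p r₁ ∧ IsWordPrefix p r₂

/-- The `C'(1/6)` small cancellation condition: every piece `p` occurring in a relator
`r ∈ R*` satisfies `|p| < |r|/6`. -/
def SmallCancellationSixth (R : Set (FreeGroup α)) : Prop :=
  ∀ p : FreeGroup α, IsPiece R p →
    ∀ r ∈ symmetrize R, IsWordPrefix p r → 6 * wordLength p < wordLength r

end SmallCancellation

namespace FatBigon
set_option linter.unusedSimpArgs false

/-! ### Areas -/

/-- The inverse of a letter. -/
def linv {α : Type*} (b : α × Bool) : α × Bool := (b.1, !b.2)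

/-- The abstract properties of the set of words of the symmetrized set of relators that the
argument uses: closure under cyclic permutation and inversion, reducedness, and `C'(1/6)`. -/
structure IsSC {α : Type*} (RL : Set (List (α × Bool))) : Prop where
  rot : ∀ a b, a ++ b ∈ RL → b ++ a ∈ RL
  inv : ∀ L ∈ RL, FreeGroup.invRev L ∈ RL
  red : ∀ L ∈ RL, FreeGroup.IsReduced L
  ne : [] ∉ RL
  sc : ∀ L₁ ∈ RL, ∀ L₂ ∈ RL, L₁ ≠ L₂ → ∀ p, p <+: L₁ → p <+: L₂ → 6 * p.length < L₁.length

/-- `Ar RL k x`: the element `x` of the free group is a product of at most `k` conjugates of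
relators, that is, `x` has area at most `k`. -/
inductive Ar {α : Type*} (RL : Set (List (α × Bool))) : ℕ → FreeGroup α → Prop
  | one (k : ℕ) : Ar RL k 1
  | mul {k : ℕ} {x : FreeGroup α} (g : FreeGroup α) {L : List (α × Bool)} :
      L ∈ RL → Ar RL k x → Ar RL (k + 1) (g * FreeGroup.mk L * g⁻¹ * x)

open FreeGroup (invRev)

variable {α : Type*}

@[simp] lemma linv_linv (b : α × Bool) : linv (linv b) = b := by simp [linv]

lemma linv_ne (b : α × Bool) : linv b ≠ b := by
  rcases b with ⟨x, _ | _⟩ <;> simp [linv]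

lemma mk_app (a b : List (α × Bool)) : FreeGroup.mk (a ++ b) = FreeGroup.mk a * FreeGroup.mk b := FreeGroup.mul_mk.symm

/-- The generator (or inverse of a generator) given by a letter. -/
def lt (b : α × Bool) : FreeGroup α := FreeGroup.mk [b]

lemma mk_cons (b : α × Bool) (L : List (α × Bool)) : FreeGroup.mk (b :: L) = lt b * FreeGroup.mk L :=
  mk_app [b] L

lemma mk_nil : FreeGroup.mk ([] : List (α × Bool)) = 1 := rfl

lemma mk_inv (L : List (α × Bool)) : FreeGroup.mk (invRev L) = (FreeGroup.mk L)⁻¹ := FreeGroup.inv_mk.symm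

lemma lt_linv (b : α × Bool) : lt (linv b) = (lt b)⁻¹ := by
  rw [lt, lt, FreeGroup.inv_mk]; rfl

lemma inv_app (a b : List (α × Bool)) : invRev (a ++ b) = invRev b ++ invRev a :=
  FreeGroup.invRev_append

lemma inv_single (b : α × Bool) : invRev [b] = [linv b] := rfl

lemma inv_cons (b : α × Bool) (L : List (α × Bool)) : invRev (b :: L) = invRev L ++ [linv b] := by
  rw [← List.singleton_append, inv_app, inv_single]

lemma inv_inv (L : List (α × Bool)) : invRev (invRev L) = L := FreeGroup.invRev_invRev

section
variable {RL : Set (List (α × Bool))}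

lemma Ar.mono {k j : ℕ} {x : FreeGroup α} (h : Ar RL k x) (hkj : k ≤ j) : Ar RL j x := by
  induction h generalizing j with
  | one k => exact .one j
  | mul g hL _ ih =>
    obtain ⟨j, rfl⟩ : ∃ j', j = j' + 1 := ⟨j - 1, by omega⟩
    exact .mul g hL (ih (by omega))

lemma Ar.zero {x : FreeGroup α} (h : Ar RL 0 x) : x = 1 := by
  cases h; rfl

lemma Ar.prod {i j : ℕ} {x y : FreeGroup α} (hx : Ar RL i x) (hy : Ar RL j y) :
    Ar RL (i + j) (x * y) := by
  induction hx with
  | one k => simpa using hy.mono (by omega)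
  | mul g hL _ ih =>
    rw [mul_assoc, show ∀ k : ℕ, k + 1 + j = k + j + 1 by omega]
    exact .mul g hL ih

lemma Ar.conj {k : ℕ} {x : FreeGroup α} (h : Ar RL k x) (g : FreeGroup α) :
    Ar RL k (g * x * g⁻¹) := by
  induction h with
  | one k => simpa using .one k
  | @mul k x y L hL _ ih =>
    have := Ar.mul (g * y) hL ih
    convert this using 1
    group

lemma Ar.rel {L : List (α × Bool)} (h : L ∈ RL) : Ar RL 1 (FreeGroup.mk L) := by
  simpa using Ar.mul 1 h (.one 0)

lemma Ar.relConj {L : List (α × Bool)} (h : L ∈ RL) (g : FreeGroup α) :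
    Ar RL 1 (g * FreeGroup.mk L * g⁻¹) := (Ar.rel h).conj g

lemma Ar.comm {k : ℕ} {x y : FreeGroup α} (h : Ar RL k (x * y)) : Ar RL k (y * x) := by
  have := h.conj y
  convert this using 1
  group

/-- In terms of diagrams: a closed diagram for `x` is attached at a boundary point. -/
lemma Ar.insert {i j : ℕ} {x y z : FreeGroup α} (hx : Ar RL i x) (h : Ar RL j (y * z)) :
    Ar RL (i + j) (y * x * z) := by
  have := (hx.conj y).prod h
  convert this using 1
  group

/-- A relator read along the boundary can be removed at the cost of one more face. -/
lemma Ar.remove {j : ℕ} {y z : FreeGroup α} {c : List (α × Bool)} (hRL : IsSC RL) (hc : c ∈ RL)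
    (h : Ar RL j (y * FreeGroup.mk c * z)) : Ar RL (j + 1) (y * z) := by
  have := (Ar.relConj (hRL.inv c hc) y).prod h
  rw [add_comm 1 j] at this
  convert this using 1
  rw [mk_inv]
  group

lemma Ar.of_eq {k : ℕ} {x y : FreeGroup α} (h : Ar RL k x) (e : x = y) : Ar RL k y := e ▸ h

end

/-! ### Matching a letter of a word of bounded area -/

/-- The conclusion of the peeling lemma: for each letter `b` of `w = P b Q`, either `b` lies on a
relator `b c` whose removal lowers the area (first case), or `b` is matched with an inverse
letter to its right or to its left, splitting the area between the two sides of the match. -/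
def Peel (RL : Set (List (α × Bool))) (k : ℕ) (w : List (α × Bool)) : Prop :=
  ∀ P b Q, w = P ++ b :: Q →
    (∃ c, b :: c ∈ RL ∧ ∃ j < k, Ar RL j (FreeGroup.mk P * (FreeGroup.mk c)⁻¹ * FreeGroup.mk Q)) ∨
    (∃ B C i j, Q = B ++ linv b :: C ∧ Ar RL i (FreeGroup.mk B) ∧ Ar RL j (FreeGroup.mk P * FreeGroup.mk C) ∧ i + j ≤ k) ∨
    (∃ A B i j, P = A ++ linv b :: B ∧ Ar RL i (FreeGroup.mk B) ∧ Ar RL j (FreeGroup.mk A * FreeGroup.mk Q) ∧ i + j ≤ k)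

lemma Peel.mono {RL : Set (List (α × Bool))} {k j : ℕ} {w} (h : Peel RL k w) (hkj : k ≤ j) :
    Peel RL j w := by
  intro P b Q e
  rcases h P b Q e with ⟨c, hc, i, hi, h⟩ | ⟨B, C, i, l, h1, h2, h3, h4⟩ |
      ⟨B, C, i, l, h1, h2, h3, h4⟩
  · exact .inl ⟨c, hc, i, by omega, h⟩
  · exact .inr (.inl ⟨B, C, i, l, h1, h2, h3, by omega⟩)
  · exact .inr (.inr ⟨B, C, i, l, h1, h2, h3, by omega⟩)

lemma append_cons_cases {β : Type*} {p q P Q : List β} {b : β} (h : p ++ q = P ++ b :: Q) :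
    (∃ p', p = P ++ b :: p' ∧ Q = p' ++ q) ∨ (∃ q', P = p ++ q' ∧ q = q' ++ b :: Q) := by
  rcases List.append_eq_append_iff.1 h with ⟨a, rfl, rfl⟩ | ⟨c, rfl, hc⟩
  · exact .inr ⟨a, rfl, rfl⟩
  · rcases c with _ | ⟨x, c⟩
    · exact .inr ⟨[], by simp, by simpa using hc.symm⟩
    · simp only [List.cons_append, List.cons.injEq] at hc
      obtain ⟨rfl, rfl⟩ := hc
      exact .inl ⟨c, rfl, rfl⟩

/-- Peeling at area `0`, that is, for words that are trivial in the free group: it is inherited when a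
cancelling pair is inserted. -/
lemma peel_zero_step {RL : Set (List (α × Bool))} {p q : List (α × Bool)} (b : α × Bool)
    (h : Peel RL 0 (p ++ q)) (h0 : Ar RL 0 (FreeGroup.mk p * FreeGroup.mk q)) :
    Peel RL 0 (p ++ b :: linv b :: q) := by
  have one := Ar.one (RL := RL) 0
  intro P x Q e
  rcases append_cons_cases e with ⟨p', rfl, rfl⟩ | ⟨q', rfl, e'⟩
  · rcases h P x (p' ++ q) (by simp) with ⟨c, hc, i, hi, h⟩ | ⟨B, C, i, l, h1, h2, h3, h4⟩ |
      ⟨A, B, i, l, h1, h2, h3, h4⟩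
    · omega
    · rcases append_cons_cases h1 with ⟨D, rfl, rfl⟩ | ⟨D, rfl, rfl⟩
      · refine .inr (.inl ⟨B, D ++ b :: linv b :: q, i, l, by simp, h2, ?_, h4⟩)
        refine h3.of_eq ?_
        simp only [mk_app, mk_cons, lt_linv]; group
      · refine .inr (.inl ⟨p' ++ b :: linv b :: D, C, i, l, by simp, ?_, h3, h4⟩)
        refine h2.of_eq ?_
        simp only [mk_app, mk_cons, lt_linv]; group
    · refine .inr (.inr ⟨A, B, i, l, h1, h2, ?_, h4⟩)
      refine h3.of_eq ?_
      simp only [mk_app, mk_cons, lt_linv]; group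
  · rcases q' with _ | ⟨y, _ | ⟨z, q'⟩⟩
    · simp only [List.nil_append, List.cons.injEq] at e'
      obtain ⟨rfl, rfl⟩ := e'
      exact .inr (.inl ⟨[], q, 0, 0, rfl, one, by simpa using h0, le_rfl⟩)
    · simp only [List.cons_append, List.nil_append, List.cons.injEq] at e'
      obtain ⟨rfl, rfl, rfl⟩ := e'
      exact .inr (.inr ⟨p, [], 0, 0, by simp, one, by simpa using h0, le_rfl⟩)
    · simp only [List.cons_append, List.cons.injEq] at e'
      obtain ⟨rfl, rfl, rfl⟩ := e'
      rcases h (p ++ q') x Q (by simp) with ⟨c, hc, i, hi, h⟩ | ⟨B, C, i, l, h1, h2, h3, h4⟩ |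
        ⟨A, B, i, l, h1, h2, h3, h4⟩
      · omega
      · refine .inr (.inl ⟨B, C, i, l, h1, h2, ?_, h4⟩)
        refine h3.of_eq ?_
        simp only [mk_app, mk_cons, lt_linv]; group
      · rcases append_cons_cases h1 with ⟨D, rfl, rfl⟩ | ⟨D, rfl, rfl⟩
        · refine .inr (.inr ⟨A, D ++ b :: linv b :: q', i, l, by simp, ?_, h3, h4⟩)
          refine h2.of_eq ?_
          simp only [mk_app, mk_cons, lt_linv]; group
        · refine .inr (.inr ⟨p ++ b :: linv b :: D, B, i, l, by simp, h2, ?_, h4⟩)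
          refine h3.of_eq ?_
          simp only [mk_app, mk_cons, lt_linv]; group

lemma peel_zero {RL : Set (List (α × Bool))} {w : List (α × Bool)} (h : FreeGroup.mk w = 1) :
    Peel RL 0 w := by
  have hr : FreeGroup.Red w [] := by
    rcases FreeGroup.Red.exact.1 (h.trans FreeGroup.one_eq_mk) with ⟨c, h1, h2⟩
    rwa [FreeGroup.Red.nil_iff.1 h2] at h1
  clear h
  induction hr using Relation.ReflTransGen.head_induction_on with
  | refl => intro P b Q e; simp at e
  | head hs hr ih =>
    cases hs with
    | @not p q x y =>
      have h1 : FreeGroup.mk (p ++ q) = 1 := FreeGroup.Red.exact.2 ⟨[], hr, .refl⟩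
      have := peel_zero_step (x, y) ih (by rw [← mk_app, h1]; exact .one 0)
      simpa [linv] using this

/-- A relator `c` can be inserted in `w`, at the end of a tail of length `n`, so that the area drops
to `k`. -/
def Lolli (RL : Set (List (α × Bool))) (k : ℕ) (w : List (α × Bool)) (n : ℕ) : Prop :=
  ∃ p q e c, w = p ++ q ∧ c ∈ RL ∧ e.length = n ∧
    Ar RL k (FreeGroup.mk p * FreeGroup.mk e * FreeGroup.mk c * (FreeGroup.mk e)⁻¹ * FreeGroup.mk q)

/-- The last letter `b` of the tail of a lollipop can be peeled, using the peeling lemma at area `k` for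
the word with the lollipop inserted. Whatever `b` is matched with, a shorter tail can be found. -/
lemma Lolli.shorter {RL : Set (List (α × Bool))} (hRL : IsSC RL) {k : ℕ} {w : List (α × Bool)}
    (ih : ∀ w, Ar RL k (FreeGroup.mk w) → Peel RL k w) (hw : ¬ Ar RL k (FreeGroup.mk w)) {n : ℕ}
    (h : Lolli RL k w (n + 1)) : ∃ m < n + 1, Lolli RL k w m := by
  obtain ⟨p, q, e, c, rfl, hc, he, hA⟩ := h
  rcases List.eq_nil_or_concat e with rfl | ⟨e', b, rfl⟩
  · simp at he
  simp only [List.concat_eq_append] at *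
  have he' : e'.length = n := by simpa using he
  have hrel : ∀ {b : α × Bool} {a c d : List (α × Bool)}, c = a ++ linv b :: d →
      c ∈ RL → d ++ (a ++ [linv b]) ∈ RL := by
    rintro b a c d rfl h
    exact hRL.rot (a ++ [linv b]) d (by simpa using h)
  have hZ := ih ((p ++ e') ++ b :: (c ++ linv b :: (invRev e' ++ q))) (hA.of_eq (by
    simp only [mk_app, mk_cons, lt_linv, mk_nil, mk_inv]; group))
  rcases hZ (p ++ e') b _ rfl with ⟨c', hc', i, hi, h⟩ | ⟨B, D, i, l, h1, h2, h3, h4⟩ |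
      ⟨A, B, i, l, h1, h2, h3, h4⟩
  · -- the letter lies on another relator: remove the old one instead
    refine ⟨n, by omega, p, q, e', invRev (b :: c'), rfl, hRL.inv _ hc', he', ?_⟩
    have h' : Ar RL i (((FreeGroup.mk p * FreeGroup.mk e' * (FreeGroup.mk c')⁻¹) * FreeGroup.mk c * ((lt b)⁻¹ * (FreeGroup.mk e')⁻¹ * FreeGroup.mk q))) :=
      h.of_eq (by simp only [mk_app, mk_cons, lt_linv, mk_inv]; group)
    exact ((Ar.remove hRL hc h').mono hi).of_eq
      (by simp only [mk_app, mk_cons, mk_nil, mk_inv]; group)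
  · rcases append_cons_cases h1 with ⟨D', rfl, rfl⟩ | ⟨D', rfl, h5⟩
    · refine ⟨n, by omega, p, q, e', _, rfl, hrel rfl hc, he', ?_⟩
      refine ((Ar.insert (y := FreeGroup.mk p * FreeGroup.mk e' * FreeGroup.mk D') (z := (lt b)⁻¹ * (FreeGroup.mk e')⁻¹ * FreeGroup.mk q)
        h2 (h3.of_eq ?_)).mono h4).of_eq ?_ <;>
      · try simp only [mk_app, mk_cons, lt_linv, mk_nil, mk_inv]
        try group
    · rcases D' with _ | ⟨y, D'⟩
      · simp only [List.nil_append, List.cons.injEq, true_and] at h5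
        subst h5
        exact absurd ((h3.mono (by omega)).of_eq
          (by simp only [mk_app, mk_inv]; group)) hw
      · simp only [List.cons_append, List.cons.injEq] at h5
        obtain ⟨rfl, h5⟩ := h5
        rcases append_cons_cases h5 with ⟨p', h7, rfl⟩ | ⟨q', rfl, rfl⟩
        · have h6 : e' = invRev p' ++ b :: invRev D' := by
            rw [← inv_inv e', h7, inv_app, inv_cons]; simp
          subst h6
          refine ⟨p'.length + 1, by simp at he'; omega, p, q, invRev p' ++ [b], c, rfl, hc,
            by simp, ?_⟩
          refine ((Ar.insert (x := FreeGroup.mk D' * (FreeGroup.mk c * (lt b)⁻¹))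
            (y := FreeGroup.mk p * (FreeGroup.mk p')⁻¹ * lt b * (FreeGroup.mk D')⁻¹) (z := FreeGroup.mk p' * FreeGroup.mk q)
            (Ar.comm (h2.of_eq ?_)) (h3.of_eq ?_)).mono h4).of_eq ?_ <;>
          · try simp only [mk_app, mk_cons, lt_linv, mk_nil, mk_inv]
            try group
        · refine ⟨0, by omega, p ++ q', linv b :: D, [], c, by simp, hc, rfl, ?_⟩
          refine ((Ar.insert (x := FreeGroup.mk q' * (FreeGroup.mk c * (lt b)⁻¹ * (FreeGroup.mk e')⁻¹))
            (y := FreeGroup.mk p) (z := FreeGroup.mk e' * FreeGroup.mk D)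
            (Ar.comm (h2.of_eq ?_)) (h3.of_eq ?_)).mono h4).of_eq ?_ <;>
          · try simp only [mk_app, mk_cons, lt_linv, mk_nil, mk_inv]
            try group
  · rcases append_cons_cases h1 with ⟨p', rfl, rfl⟩ | ⟨q', rfl, rfl⟩
    · refine ⟨0, by omega, A, linv b :: (p' ++ q), [], c, by simp, hc, rfl, ?_⟩
      refine ((Ar.insert (y := FreeGroup.mk A * FreeGroup.mk c * (lt b)⁻¹) (z := (FreeGroup.mk e')⁻¹ * FreeGroup.mk q)
        h2 (h3.of_eq ?_)).mono h4).of_eq ?_ <;>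
      · try simp only [mk_app, mk_cons, lt_linv, mk_nil, mk_inv]
        try group
    · refine ⟨q'.length, by simp at he'; omega, p, q, q', c, rfl, hc, rfl, ?_⟩
      refine ((Ar.insert (x := (lt b)⁻¹ * FreeGroup.mk B * ((lt b)⁻¹)⁻¹) (y := FreeGroup.mk p * FreeGroup.mk q' * FreeGroup.mk c)
        (z := (lt b)⁻¹ * (FreeGroup.mk B)⁻¹ * lt b * (FreeGroup.mk q')⁻¹ * FreeGroup.mk q)
        (h2.conj _) (h3.of_eq ?_)).mono h4).of_eq ?_ <;>
      · try simp only [mk_app, mk_cons, lt_linv, mk_nil, mk_inv]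
        try group

/-- Peeling is inherited when a relator is removed from the word: a letter that was matched with a
letter of that relator now lies on it. -/
lemma peel_of_insert {RL : Set (List (α × Bool))} (hRL : IsSC RL) {k : ℕ} {p c q : List (α × Bool)}
    (hc : c ∈ RL) (h : Peel RL k (p ++ (c ++ q))) : Peel RL (k + 1) (p ++ q) := by
  -- the letter `b` sits on the relator `b A⁻¹ D⁻¹`, where `c = A b⁻¹ D`
  have hrel : ∀ {b : α × Bool} {a d : List (α × Bool)}, c = a ++ linv b :: d →
      b :: (invRev a ++ invRev d) ∈ RL := by
    rintro b a d rfl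
    have := hRL.rot (invRev d) (b :: invRev a) (by
      simpa [inv_app, inv_cons] using hRL.inv _ hc)
    simpa using this
  intro P b Q e
  rcases append_cons_cases e with ⟨p', rfl, rfl⟩ | ⟨q', rfl, rfl⟩
  · rcases h P b (p' ++ (c ++ q)) (by simp) with ⟨c', hc', i, hi, h⟩ |
      ⟨B, D, i, l, h1, h2, h3, h4⟩ | ⟨A, B, i, l, h1, h2, h3, h4⟩
    · refine .inl ⟨c', hc', i + 1, by omega, (Ar.remove hRL hc (y := FreeGroup.mk P * (FreeGroup.mk c')⁻¹ * FreeGroup.mk p')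
        (z := FreeGroup.mk q) (h.of_eq ?_)).of_eq ?_⟩ <;>
      · try simp only [mk_app]
        try group
    · rcases append_cons_cases h1 with ⟨D', rfl, rfl⟩ | ⟨D', rfl, h5⟩
      · refine .inr (.inl ⟨B, D' ++ q, i, l + 1, by simp, h2, ?_, by omega⟩)
        refine (Ar.remove hRL hc (y := FreeGroup.mk P * FreeGroup.mk D') (z := FreeGroup.mk q) (h3.of_eq ?_)).of_eq ?_ <;>
        · try simp only [mk_app]
          try group
      · rcases append_cons_cases h5 with ⟨E, h7, rfl⟩ | ⟨E, rfl, rfl⟩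
        · refine .inl ⟨_, hrel h7, i + l, by omega, ?_⟩
          refine (Ar.insert (x := FreeGroup.mk D' * FreeGroup.mk p') (y := FreeGroup.mk P * FreeGroup.mk E) (z := FreeGroup.mk q)
            (Ar.comm (h2.of_eq ?_)) (h3.of_eq ?_)).of_eq ?_ <;>
          · try simp only [mk_app, mk_inv]
            try group
        · refine .inr (.inl ⟨p' ++ E, D, i + 1, l, by simp, ?_, h3, by omega⟩)
          refine (Ar.remove hRL hc (y := FreeGroup.mk p') (z := FreeGroup.mk E) (h2.of_eq ?_)).of_eq ?_ <;>
          · try simp only [mk_app]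
            try group
    · refine .inr (.inr ⟨A, B, i, l + 1, h1, h2, ?_, by omega⟩)
      refine (Ar.remove hRL hc (y := FreeGroup.mk A * FreeGroup.mk p') (z := FreeGroup.mk q) (h3.of_eq ?_)).of_eq ?_ <;>
      · try simp only [mk_app]
        try group
  · rcases h (p ++ (c ++ q')) b Q (by simp) with ⟨c', hc', i, hi, h⟩ |
      ⟨B, D, i, l, h1, h2, h3, h4⟩ | ⟨A, B, i, l, h1, h2, h3, h4⟩
    · refine .inl ⟨c', hc', i + 1, by omega, (Ar.remove hRL hc (y := FreeGroup.mk p)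
        (z := FreeGroup.mk q' * (FreeGroup.mk c')⁻¹ * FreeGroup.mk Q) (h.of_eq ?_)).of_eq ?_⟩ <;>
      · try simp only [mk_app]
        try group
    · refine .inr (.inl ⟨B, D, i, l + 1, h1, h2, ?_, by omega⟩)
      refine (Ar.remove hRL hc (y := FreeGroup.mk p) (z := FreeGroup.mk q' * FreeGroup.mk D) (h3.of_eq ?_)).of_eq ?_ <;>
      · try simp only [mk_app]
        try group
    · rcases append_cons_cases h1 with ⟨D', rfl, rfl⟩ | ⟨D', rfl, h5⟩
      · refine .inr (.inr ⟨A, D' ++ q', i + 1, l, by simp, ?_, h3, by omega⟩)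
        refine (Ar.remove hRL hc (y := FreeGroup.mk D') (z := FreeGroup.mk q') (h2.of_eq ?_)).of_eq ?_ <;>
        · try simp only [mk_app]
          try group
      · rcases append_cons_cases h5 with ⟨E, h7, rfl⟩ | ⟨E, rfl, rfl⟩
        · refine .inl ⟨_, hrel h7, i + l, by omega, ?_⟩
          refine (Ar.insert (x := FreeGroup.mk q' * FreeGroup.mk E) (y := FreeGroup.mk p) (z := FreeGroup.mk D' * FreeGroup.mk Q)
            (Ar.comm (h2.of_eq ?_)) (h3.of_eq ?_)).of_eq ?_ <;>
          · try simp only [mk_app, mk_inv]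
            try group
        · refine .inr (.inr ⟨p ++ E, B, i, l + 1, by simp, h2, ?_, by omega⟩)
          refine (Ar.remove hRL hc (y := FreeGroup.mk p) (z := FreeGroup.mk E * FreeGroup.mk Q) (h3.of_eq ?_)).of_eq ?_ <;>
          · try simp only [mk_app]
            try group

/-- The peeling lemma, for arbitrary (possibly non-reduced) words. It replaces planar van Kampen
diagrams: the letter `b` bounds a face of a minimal diagram, or it lies on a bridge. -/
theorem peel {RL : Set (List (α × Bool))} (hRL : IsSC RL) (k : ℕ) (w : List (α × Bool))
    (h : Ar RL k (FreeGroup.mk w)) : Peel RL k w := by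
  induction k generalizing w with
  | zero => exact peel_zero h.zero
  | succ k ih =>
    by_cases hw : Ar RL k (FreeGroup.mk w)
    · exact (ih w hw).mono (by omega)
    have hex : ∃ n, Lolli RL k w n := by
      generalize hx : FreeGroup.mk w = x at h hw
      cases h with
      | one => exact absurd (.one k) hw
      | @mul _ x g L hL hA =>
        obtain ⟨e, rfl⟩ : ∃ e, FreeGroup.mk e = g := Quot.exists_rep g
        refine ⟨_, [], w, e, invRev L, rfl, hRL.inv L hL, rfl, hA.of_eq ?_⟩
        rw [hx]
        simp only [mk_nil, mk_inv]; group
    classical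
    have hmin := Nat.find_spec hex
    rcases hn : Nat.find hex with _ | n
    · rw [hn] at hmin
      obtain ⟨p, q, e, c, rfl, hc, he, hA⟩ := hmin
      obtain rfl := List.length_eq_zero_iff.1 he
      refine peel_of_insert hRL hc (ih _ (hA.of_eq ?_))
      simp only [mk_app, mk_nil]; group
    · rw [hn] at hmin
      obtain ⟨m, hm, h⟩ := hmin.shorter hRL ih hw
      exact absurd h (Nat.find_min hex (by omega))

end FatBigon

namespace FatBigon
set_option linter.unusedSimpArgs false
open FreeGroup (invRev)
variable {α : Type*}

/-! ### Words -/

/-- A word is cyclically reduced at its ends: its last letter is not inverse to its first. -/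
def CycRed (w : List (α × Bool)) : Prop := ∀ b w', w ≠ b :: (w' ++ [linv b])

lemma not_red_pair (a c : List (α × Bool)) (b : α × Bool) :
    ¬ FreeGroup.IsReduced (a ++ b :: linv b :: c) := by
  intro h
  have := (h.infix (L₁ := [b, linv b]) ⟨a, c, by simp⟩)
  simp [FreeGroup.IsReduced, linv] at this

lemma red_inv {w : List (α × Bool)} (h : FreeGroup.IsReduced w) : FreeGroup.IsReduced (invRev w) := by
  rw [FreeGroup.isReduced_iff_not_step] at h ⊢
  intro L hL
  refine h (invRev L) ?_
  have := FreeGroup.Red.step_invRev_iff.2 hL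
  rwa [inv_inv] at this

lemma red_left {a b : List (α × Bool)} (h : FreeGroup.IsReduced (a ++ b)) : FreeGroup.IsReduced a :=
  h.infix ⟨[], b, by simp⟩

lemma red_right {a b : List (α × Bool)} (h : FreeGroup.IsReduced (a ++ b)) : FreeGroup.IsReduced b :=
  h.infix ⟨a, [], by simp⟩

lemma red_mid {a b c : List (α × Bool)} (h : FreeGroup.IsReduced (a ++ b ++ c)) : FreeGroup.IsReduced b :=
  h.infix ⟨a, c, rfl⟩

lemma eq_nil_of_inv_self : ∀ (n : ℕ) (a : List (α × Bool)), a.length ≤ n → FreeGroup.IsReduced a →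
    invRev a = a → a = [] := by
  intro n
  induction n using Nat.strong_induction_on with
  | _ n ih =>
    intro a hn hr h
    rcases a with _ | ⟨x, a⟩
    · rfl
    rcases List.eq_nil_or_concat a with rfl | ⟨a', y, rfl⟩
    · simp only [inv_single, List.cons.injEq, and_true] at h
      exact absurd h (linv_ne x)
    · simp only [List.concat_eq_append] at *
      rw [inv_cons, inv_app, inv_single, List.singleton_append, List.cons_append] at h
      simp only [List.cons.injEq] at h
      obtain ⟨rfl, h⟩ := h
      have h1 : invRev a' = a' := (List.append_inj' h rfl).1
      have := ih (n - 1) (by simp at hn; omega) a' (by simp at hn; omega)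
        (hr.infix ⟨[linv y], [y], by simp⟩) h1
      subst this
      have := not_red_pair [] [] (linv y)
      simp at this
      exact absurd hr (by simpa using this)

/-- A relator is not a cyclic permutation of its inverse, since free groups have no involutions: the
two parts of the permuted relator would be equal to their own inverses. -/
lemma not_isRotated_inv {RL : Set (List (α × Bool))} (hRL : IsSC RL) {L : List (α × Bool)}
    (h : L ∈ RL) : ¬ L ~r invRev L := by
  rintro ⟨n, hn⟩
  obtain ⟨a, b, rfl, e⟩ : ∃ a b, L = a ++ b ∧ L.rotate n = b ++ a :=
    ⟨_, _, (List.take_append_drop (n % L.length) L).symm, List.rotate_eq_drop_append_take_mod⟩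
  rw [hn, inv_app] at e
  have hl := List.append_inj e (by simp)
  have hr := hRL.red _ h
  have h1 := eq_nil_of_inv_self _ a le_rfl (red_left hr) hl.2
  have h2 := eq_nil_of_inv_self _ b le_rfl (red_right hr) hl.1
  subst h1 h2
  exact hRL.ne h

lemma rot_mem {RL : Set (List (α × Bool))} (hRL : IsSC RL) {L L' : List (α × Bool)}
    (h : L ∈ RL) (e : L ~r L') : L' ∈ RL := by
  obtain ⟨n, rfl⟩ := e
  rw [List.rotate_eq_drop_append_take_mod]
  exact hRL.rot _ _ (by rwa [List.take_append_drop])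

lemma rotated_app (a b : List (α × Bool)) : (a ++ b) ~r (b ++ a) := List.isRotated_append

lemma rotated_inv {L L' : List (α × Bool)} (h : L ~r L') : invRev L ~r invRev L' := by
  obtain ⟨n, rfl⟩ := h
  rw [List.rotate_eq_drop_append_take_mod]
  conv_lhs => rw [← List.take_append_drop (n % L.length) L]
  rw [inv_app, inv_app]
  exact rotated_app _ _

lemma red_join {a u : List (α × Bool)} (ha : FreeGroup.IsReduced a) (hu : FreeGroup.IsReduced u)
    (h : ∀ a' b u', a = a' ++ [linv b] → u ≠ b :: u') : FreeGroup.IsReduced (a ++ u) := by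
  rcases List.eq_nil_or_concat a with rfl | ⟨a', x, rfl⟩
  · simpa
  rcases u with _ | ⟨y, u⟩
  · simpa using ha
  simp only [List.concat_eq_append] at *
  rw [FreeGroup.IsReduced, List.isChain_append]
  refine ⟨ha, hu, ?_⟩
  intro x' hx y' hy e
  simp at hx hy
  subst hx hy
  by_contra hne
  refine h a' y u ?_ rfl
  have : x = linv y := by
    rcases x with ⟨x1, x2⟩
    rcases y with ⟨y1, y2⟩
    simp only at e hne
    subst e
    cases x2 <;> cases y2 <;> simp_all [linv]
  rw [this]

/-- The maximal cancellation in a product `D A`. -/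
lemma fold_pair (A : List (α × Bool)) : ∀ D : List (α × Bool), ∃ y a d,
    A = y ++ a ∧ D = d ++ invRev y ∧
      (a = [] ∨ d = [] ∨ ∀ b a' d', a = b :: a' → d ≠ d' ++ [linv b]) := by
  induction A with
  | nil => exact fun D => ⟨[], [], D, rfl, by simp [invRev], .inl rfl⟩
  | cons x A ih =>
    intro D
    by_cases h : ∃ D', D = D' ++ [linv x]
    · obtain ⟨D', rfl⟩ := h
      obtain ⟨y, a, d, rfl, rfl, h⟩ := ih D'
      exact ⟨x :: y, a, d, rfl, by simp [inv_cons], h⟩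
    · refine ⟨[], x :: A, D, rfl, by simp [invRev], .inr (.inr ?_)⟩
      intro b a' d' e h'
      simp only [List.cons.injEq] at e
      exact h ⟨d', by rw [e.1, h']⟩

/-- A nonempty reduced word is conjugate to a nonempty cyclically reduced one. -/
lemma fold_single : ∀ (n : ℕ) (W : List (α × Bool)), W.length ≤ n → FreeGroup.IsReduced W → W ≠ [] →
    ∃ y B, W = y ++ (B ++ invRev y) ∧ B ≠ [] ∧ CycRed B := by
  intro n
  induction n with
  | zero => intro W h _ hW; simp at h; exact absurd h hW
  | succ n ih =>
    intro W hn hr hW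
    by_cases hc : CycRed W
    · exact ⟨[], W, by simp [invRev], hW, hc⟩
    simp only [CycRed, not_forall, not_not] at hc
    obtain ⟨b, w, rfl⟩ := hc
    have hw : w ≠ [] := by
      rintro rfl
      exact not_red_pair [] [] b (by simpa using hr)
    obtain ⟨y, B, rfl, hB, h⟩ := ih w (by simp at hn; omega)
      (hr.infix ⟨[b], [linv b], by simp⟩) hw
    exact ⟨b :: y, B, by simp [inv_cons], hB, h⟩

/-- A face adjacent to an initial part `x` of the boundary can be chosen so that the boundary word
remains reduced after its removal: if it does not, `x` is lengthened. -/
lemma face_exists {RL : Set (List (α × Bool))} (hRL : IsSC RL) {k : ℕ} :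
    ∀ (n : ℕ) (x c u : List (α × Bool)), u.length ≤ n → FreeGroup.IsReduced (x ++ u) → x ≠ [] →
      x ++ c ∈ RL → Ar RL k ((FreeGroup.mk c)⁻¹ * FreeGroup.mk u) →
      ∃ x' c' u', x ++ u = x' ++ u' ∧ x' ≠ [] ∧ x' ++ c' ∈ RL ∧ Ar RL k (FreeGroup.mk (invRev c' ++ u')) ∧
        FreeGroup.IsReduced (invRev c' ++ u') := by
  intro n
  induction n with
  | zero =>
    intro x c u hu hr hx hc hA
    simp at hu
    subst hu
    refine ⟨x, c, [], rfl, hx, hc, ?_, ?_⟩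
    · rw [mk_app, mk_inv]; exact hA
    · simpa using red_inv (red_right (hRL.red _ hc))
  | succ n ih =>
    intro x c u hu hr hx hc hA
    by_cases hj : ∃ b c' u', c = b :: c' ∧ u = b :: u'
    · obtain ⟨b, c', u', rfl, rfl⟩ := hj
      obtain ⟨x', c'', u'', h, h'⟩ := ih (x ++ [b]) c' u' (by simp at hu; omega) (by simpa using hr)
        (by simp) (by simpa using hc) (hA.of_eq (by simp only [mk_cons]; group))
      exact ⟨x', c'', u'', by rw [← h]; simp, h'⟩
    · refine ⟨x, c, u, rfl, hx, hc, ?_, ?_⟩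
      · rw [mk_app, mk_inv]; exact hA
      · refine red_join (red_inv (red_right (hRL.red _ hc))) (red_right hr) ?_
        intro a' b u' e h'
        refine hj ⟨b, invRev a', u', ?_, h'⟩
        rw [← inv_inv c, e, inv_app, inv_single, linv_linv]; rfl

end FatBigon

namespace FatBigon
set_option linter.unusedSimpArgs false
open FreeGroup (invRev)
variable {α : Type*}

lemma prefix_app {β : Type*} {a b c : List β} (h : a <+: b ++ c) :
    a <+: b ∨ ∃ t, a = b ++ t ∧ t <+: c := by
  obtain ⟨r, hr⟩ := h
  rcases List.append_eq_append_iff.1 hr with ⟨d, rfl, rfl⟩ | ⟨d, rfl, rfl⟩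
  · exact .inl ⟨d, rfl⟩
  · exact .inr ⟨d, rfl, ⟨r, rfl⟩⟩

/-! ### Segments of a boundary word -/

/-- A segment of the boundary word of a region: `word` is read from the point `pos`, and it is
contributed by the outer side `color`. Color `0` is a geodesic side, on which the segment occupies
the interval `[hi - |word|, hi)` (the parameter of the geodesic runs against the word).
For every other color, `rel` is the relator, of which `word` is a prefix, labelling the face on the
other side of the segment. -/
structure Seg (α : Type*) where
  color : ℕ
  word : List (α × Bool)
  rel : List (α × Bool)
  hi : ℕ
  pos : FreeGroup α

namespace Seg

/-- The first `n` letters of a segment. -/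
def take (s : Seg α) (n : ℕ) : Seg α := ⟨s.color, s.word.take n, s.rel, s.hi, s.pos⟩

/-- What remains of a segment after its first `n` letters. -/
def drop (s : Seg α) (n : ℕ) : Seg α :=
  ⟨s.color, s.word.drop n, s.rel.rotate n, s.hi - n, s.pos * FreeGroup.mk (s.word.take n)⟩

/-- The translate of a segment by a group element. -/
def shift (Y : FreeGroup α) (s : Seg α) : Seg α := ⟨s.color, s.word, s.rel, s.hi, Y * s.pos⟩

/-- The loop around the outer face adjacent to a segment, based at the origin. -/
def loop (s : Seg α) : FreeGroup α := s.pos * FreeGroup.mk s.rel * s.pos⁻¹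

end Seg

/-- The word read along a list of segments. -/
def flat (S : List (Seg α)) : List (α × Bool) := S.flatMap Seg.word

@[simp] lemma flat_nil : flat ([] : List (Seg α)) = [] := rfl
@[simp] lemma flat_cons (s : Seg α) (S : List (Seg α)) : flat (s :: S) = s.word ++ flat S := rfl
@[simp] lemma flat_append (S T : List (Seg α)) : flat (S ++ T) = flat S ++ flat T := by
  simp [flat]
@[simp] lemma flat_shift (Y : FreeGroup α) (S : List (Seg α)) :
    flat (S.map (Seg.shift Y)) = flat S := by
  simp [flat, List.flatMap_map, Seg.shift]

/-- The segments follow each other along a path that starts at `h`. -/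
def Placed : FreeGroup α → List (Seg α) → Prop
  | _, [] => True
  | h, s :: S => s.pos = h ∧ Placed (h * FreeGroup.mk s.word) S

lemma placed_append (h : FreeGroup α) (S T : List (Seg α)) :
    Placed h (S ++ T) ↔ Placed h S ∧ Placed (h * FreeGroup.mk (flat S)) T := by
  induction S generalizing h with
  | nil => simp [Placed, mk_nil]
  | cons s S ih =>
    simp only [List.cons_append, Placed, ih, flat_cons, mk_app, mul_assoc, and_assoc]

lemma placed_shift {h : FreeGroup α} {S : List (Seg α)} (Y : FreeGroup α) (hS : Placed h S) :
    Placed (Y * h) (S.map (Seg.shift Y)) := by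
  induction S generalizing h with
  | nil => trivial
  | cons s S ih =>
    refine ⟨by rw [Seg.shift, hS.1], ?_⟩
    have := ih hS.2
    rwa [← mul_assoc] at this

variable {H : Type*} [Group H]

/-- The conditions on a single segment of the boundary of a region of area `k` with boundary
loop `g`. The condition `c1` says that gluing the adjacent outer face to the region along the
segment does not produce a cancelling pair of faces. -/
structure SegOK (RL : Set (List (α × Bool))) (φ : FreeGroup α →* H) (v : ℕ → H) (k M : ℕ)
    (len : ℕ → ℕ) (pts : ℕ → Set H) (g : FreeGroup α) (s : Seg α) : Prop where
  color_lt : s.color < M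
  rel_mem : s.color ≠ 0 → s.rel ∈ RL
  pre : s.color ≠ 0 → s.word <+: s.rel
  len_eq : s.color ≠ 0 → s.rel.length = len s.color
  pts_mem : s.color ≠ 0 → ∀ a, a <+: s.rel → φ (s.pos * FreeGroup.mk a) ∈ pts s.color
  c1 : s.color ≠ 0 → ∀ j < k, ¬ Ar RL j (s.loop⁻¹ * g)
  le_hi : s.color = 0 → s.word.length ≤ s.hi
  geo : s.color = 0 → ∀ a, a <+: s.word → φ (s.pos * FreeGroup.mk a) = v (s.hi - a.length)

/-- The conditions on two segments, in this order along the boundary loop `g`, of a region of area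
`k`: the outer faces of different colors do not cancel when both are glued to the region. -/
def SegPair (RL : Set (List (α × Bool))) (k : ℕ) (g : FreeGroup α) (s s' : Seg α) : Prop :=
  s.color ≠ 0 → s'.color ≠ 0 →
    (s.color = s'.color → s.rel ~r s'.rel) ∧
    (s.color ≠ s'.color → ∀ j ≤ k, ¬ Ar RL j (s.loop⁻¹ * s'.loop⁻¹ * g))

/-- The conditions on all segments of the boundary of a region. -/
structure Valid (RL : Set (List (α × Bool))) (φ : FreeGroup α →* H) (v : ℕ → H) (k M : ℕ)
    (len : ℕ → ℕ) (pts : ℕ → Set H) (g : FreeGroup α) (S : List (Seg α)) : Prop where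
  ok : ∀ s ∈ S, SegOK RL φ v k M len pts g s
  pairs : S.Pairwise (SegPair RL k g)

section
variable {RL : Set (List (α × Bool))} {φ : FreeGroup α →* H} {v : ℕ → H} {k M : ℕ}
  {len : ℕ → ℕ} {pts : ℕ → Set H} {g : FreeGroup α} {S T : List (Seg α)}

lemma SegPair.congr {s s' t t' : Seg α} (h : SegPair RL k g s s') (h1 : t.color = s.color)
    (h2 : t.color ≠ 0 → t.loop = s.loop) (h3 : s.rel ~r t.rel) (h4 : t'.color = s'.color)
    (h5 : t'.color ≠ 0 → t'.loop = s'.loop) (h6 : s'.rel ~r t'.rel) : SegPair RL k g t t' := by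
  intro h7 h8
  have h9 := h (h1 ▸ h7) (h4 ▸ h8)
  rw [h1, h2 h7, h4, h5 h8]
  exact ⟨fun e => h3.symm.trans ((h9.1 e).trans h6), h9.2⟩

lemma Valid.sublist (h : Valid RL φ v k M len pts g S) (hT : T.Sublist S) :
    Valid RL φ v k M len pts g T :=
  ⟨fun s hs => h.ok s (hT.subset hs), h.pairs.sublist hT⟩

lemma SegOK.rel_split {s : Seg α} (h : SegOK RL φ v k M len pts g s) (h0 : s.color ≠ 0) (n : ℕ) :
    ∃ r, s.rel = s.word.take n ++ (s.word.drop n ++ r) ∧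
      (n ≤ s.word.length → s.rel.rotate n = s.word.drop n ++ r ++ s.word.take n) := by
  obtain ⟨r, hr⟩ := h.pre h0
  refine ⟨r, by rw [← List.append_assoc, List.take_append_drop, hr], fun hn => ?_⟩
  rw [List.rotate_eq_drop_append_take (by rw [← hr]; simp; omega), ← hr,
    List.drop_append_of_le_length hn, List.take_append_of_le_length hn]

lemma Seg.drop_loop {s : Seg α} (h : SegOK RL φ v k M len pts g s) (h0 : s.color ≠ 0) {n : ℕ}
    (hn : n ≤ s.word.length) : (s.drop n).loop = s.loop := by
  obtain ⟨r, h1, h2⟩ := h.rel_split h0 n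
  rw [Seg.loop, Seg.loop, Seg.drop, h2 hn, h1]
  simp only [mk_app]; group

lemma SegOK.take {s : Seg α} (h : SegOK RL φ v k M len pts g s) (n : ℕ) :
    SegOK RL φ v k M len pts g (s.take n) where
  color_lt := h.color_lt
  rel_mem := h.rel_mem
  pre h0 := (List.take_prefix _ _).trans (h.pre h0)
  len_eq := h.len_eq
  pts_mem := h.pts_mem
  c1 := h.c1
  le_hi h0 := by have := h.le_hi h0; simp [Seg.take]; omega
  geo h0 a ha := h.geo h0 a (ha.trans (List.take_prefix _ _))

lemma SegOK.drop (hRL : IsSC RL) (hφ : ∀ L ∈ RL, φ (FreeGroup.mk L) = 1) {s : Seg α}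
    (h : SegOK RL φ v k M len pts g s) {n : ℕ} (hn : n ≤ s.word.length) :
    SegOK RL φ v k M len pts g (s.drop n) where
  color_lt := h.color_lt
  rel_mem h0 := rot_mem hRL (h.rel_mem h0) ⟨n, rfl⟩
  pre h0 := by
    obtain ⟨r, h1, h2⟩ := h.rel_split h0 n
    exact ⟨r ++ s.word.take n, by simp [Seg.drop, h2 hn]⟩
  len_eq h0 := by simpa [Seg.drop] using h.len_eq h0
  pts_mem h0 a ha := by
    obtain ⟨r, h1, h2⟩ := h.rel_split h0 n
    change a <+: s.rel.rotate n at ha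
    change φ (s.pos * FreeGroup.mk (s.word.take n) * FreeGroup.mk a) ∈ pts s.color
    rw [h2 hn] at ha
    rcases prefix_app ha with h' | ⟨t, rfl, ht⟩
    · have := h.pts_mem h0 (s.word.take n ++ a) (by rw [h1]; exact (List.prefix_append_right_inj _).2 h')
      rwa [mk_app, ← mul_assoc] at this
    · have := h.pts_mem h0 t (ht.trans ((List.take_prefix _ _).trans (h.pre h0)))
      convert this using 1
      have h3 := hφ _ (h.rel_mem h0)
      rw [h1, ← List.append_assoc, List.append_assoc, mk_app, map_mul] at h3
      rw [mk_app, mul_assoc, ← mul_assoc (FreeGroup.mk _), map_mul, map_mul, map_mul, h3, one_mul, map_mul]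
  c1 h0 j hj := by rw [Seg.drop_loop h h0 hn]; exact h.c1 h0 j hj
  le_hi h0 := by
    have := h.le_hi h0
    simp only [Seg.drop, List.length_drop]; omega
  geo h0 a ha := by
    have := h.geo h0 (s.word.take n ++ a) (by
      conv_rhs => rw [← List.take_append_drop n s.word]
      exact (List.prefix_append_right_inj _).2 ha)
    rw [mk_app, ← mul_assoc] at this
    change φ (s.pos * FreeGroup.mk (s.word.take n) * FreeGroup.mk a) = v (s.hi - n - a.length)
    rw [this, List.length_append, List.length_take, min_eq_left hn, Nat.sub_sub]

lemma Valid.split (hRL : IsSC RL) (hφ : ∀ L ∈ RL, φ (FreeGroup.mk L) = 1) {X Y : List (Seg α)} {s : Seg α}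
    (h : Valid RL φ v k M len pts g (X ++ s :: Y)) {n : ℕ} (hn : n ≤ s.word.length) :
    Valid RL φ v k M len pts g (X ++ s.take n :: s.drop n :: Y) := by
  have hs := h.ok s (by simp)
  have h2 : ∀ t : Seg α, t = s.take n ∨ t = s.drop n →
      t.color = s.color ∧ (t.color ≠ 0 → t.loop = s.loop) ∧ s.rel ~r t.rel := by
    rintro t (rfl | rfl)
    · exact ⟨rfl, fun _ => rfl, .refl _⟩
    · exact ⟨rfl, fun h0 => Seg.drop_loop hs h0 hn, ⟨n, rfl⟩⟩
  have hp := h.pairs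
  rw [List.pairwise_append, List.pairwise_cons] at hp
  obtain ⟨hX, ⟨hsY, hY⟩, hXY⟩ := hp
  have hl : ∀ t : Seg α, t = s.take n ∨ t = s.drop n → ∀ y ∈ Y, SegPair RL k g t y := by
    intro t ht y hy
    obtain ⟨h3, h4, h5⟩ := h2 t ht
    exact (hsY y hy).congr h3 h4 h5 rfl (fun _ => rfl) (.refl _)
  have hr : ∀ t : Seg α, t = s.take n ∨ t = s.drop n → ∀ x ∈ X, SegPair RL k g x t := by
    intro t ht x hx
    obtain ⟨h3, h4, h5⟩ := h2 t ht
    exact (hXY x hx s (by simp)).congr rfl (fun _ => rfl) (.refl _) h3 h4 h5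
  refine ⟨?_, ?_⟩
  · intro t ht
    simp only [List.mem_append, List.mem_cons] at ht
    rcases ht with ht | rfl | rfl | ht
    · exact h.ok t (by simp [ht])
    · exact hs.take n
    · exact hs.drop hRL hφ hn
    · exact h.ok t (by simp [ht])
  · rw [List.pairwise_append, List.pairwise_cons, List.pairwise_cons]
    refine ⟨hX, ⟨?_, hl _ (.inr rfl), hY⟩, ?_⟩
    · intro y hy
      rcases List.mem_cons.1 hy with rfl | hy
      · exact fun _ _ => ⟨fun _ => ⟨n, rfl⟩, fun h => absurd rfl h⟩
      · exact hl _ (.inl rfl) y hy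
    · intro x hx y hy
      simp only [List.mem_cons] at hy
      rcases hy with rfl | rfl | hy
      · exact hr _ (.inl rfl) x hx
      · exact hr _ (.inr rfl) x hx
      · exact hXY x hx y (by simp [hy])

/-- Passage to a smaller region, possibly after a translation by an element `Y` that is trivial in
the group: if areas of loops around the old region are bounded by those around the new one,
then the cancellation conditions are inherited. -/
lemma Valid.shift {k' D M' : ℕ} {len' : ℕ → ℕ} {pts' : ℕ → Set H} {g' Y : FreeGroup α}
    (h : Valid RL φ v k M len pts g S) (hk : k = k' + D) (hM : M ≤ M')
    (hlen : ∀ p < M, len' p = len p) (hpts : ∀ p < M, pts' p = pts p) (hY : φ Y = 1)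
    (H' : ∀ x i, Ar RL i (Y * x * Y⁻¹ * g') → Ar RL (i + D) (x * g)) :
    Valid RL φ v k' M' len' pts' g' (S.map (Seg.shift Y)) := by
  have hloop : ∀ s : Seg α, (s.shift Y).loop⁻¹ = Y * s.loop⁻¹ * Y⁻¹ := by
    intro s; simp only [Seg.loop, Seg.shift]; group
  refine ⟨?_, ?_⟩
  · intro t ht
    obtain ⟨s, hs, rfl⟩ := List.mem_map.1 ht
    have hs := h.ok s hs
    have e : ∀ a, φ ((s.shift Y).pos * a) = φ (s.pos * a) := by
      intro a; simp [Seg.shift, hY]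
    refine ⟨hs.color_lt.trans_le hM, hs.rel_mem, hs.pre, fun h0 => ?_, fun h0 a ha => ?_,
      fun h0 j hj hA => ?_, hs.le_hi, fun h0 a ha => ?_⟩
    · exact (hs.len_eq h0).trans (hlen _ hs.color_lt).symm
    · rw [e]
      exact (hpts _ hs.color_lt).symm ▸ hs.pts_mem h0 a ha
    · rw [hloop] at hA
      exact hs.c1 h0 (j + D) (by omega) (H' _ _ hA)
    · rw [e]; exact hs.geo h0 a ha
  · rw [List.pairwise_map]
    refine h.pairs.imp ?_
    intro s s' hp h0 h0'
    refine ⟨(hp h0 h0').1, fun hne j hj hA => (hp h0 h0').2 hne (j + D) (by omega) (H' _ _ ?_)⟩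
    rw [hloop, hloop] at hA
    exact hA.of_eq (by group)

lemma shift_one : Seg.shift (1 : FreeGroup α) = id := by
  funext s; simp [Seg.shift]

/-- The case of `Valid.shift` without translation. -/
lemma Valid.restrict {k' D M' : ℕ} {len' : ℕ → ℕ} {pts' : ℕ → Set H} {g' : FreeGroup α}
    (h : Valid RL φ v k M len pts g S) (hk : k = k' + D) (hM : M ≤ M')
    (hlen : ∀ p < M, len' p = len p) (hpts : ∀ p < M, pts' p = pts p)
    (H' : ∀ x i, Ar RL i (x * g') → Ar RL (i + D) (x * g)) :
    Valid RL φ v k' M' len' pts' g' S := by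
  have := h.shift (Y := 1) hk hM hlen hpts (map_one φ) (g' := g')
    (fun x i hx => H' x i (hx.of_eq (by group)))
  simpa [shift_one] using this

end

/-! ### Additive weights -/

/-- An additive weight on the intervals (of given color, starting point and length); for colors
other than that of the geodesic side the starting point is irrelevant. -/
structure AddW (Φ : ℕ → ℕ → ℕ → ℕ) : Prop where
  add : ∀ c lo m n, Φ c lo (m + n) = Φ c lo m + Φ c (lo + m) n
  const : ∀ c, c ≠ 0 → ∀ lo lo' n, Φ c lo n = Φ c lo' n

/-- The weight of a segment. -/
def segW (Φ : ℕ → ℕ → ℕ → ℕ) (s : Seg α) : ℕ := Φ s.color (s.hi - s.word.length) s.word.length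

/-- The total weight of a list of segments. -/
def segSum (Φ : ℕ → ℕ → ℕ → ℕ) (S : List (Seg α)) : ℕ := (S.map (segW Φ)).sum

section
variable {Φ : ℕ → ℕ → ℕ → ℕ} {S T : List (Seg α)}

lemma AddW.zero (h : AddW Φ) (c lo : ℕ) : Φ c lo 0 = 0 := by
  have := h.add c lo 0 0; simp at this; exact this

@[simp] lemma segSum_nil : segSum Φ ([] : List (Seg α)) = 0 := rfl
@[simp] lemma segSum_cons (s : Seg α) : segSum Φ (s :: S) = segW Φ s + segSum Φ S := by
  simp [segSum]
@[simp] lemma segSum_append : segSum Φ (S ++ T) = segSum Φ S + segSum Φ T := by simp [segSum]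
@[simp] lemma segSum_shift (Y : FreeGroup α) : segSum Φ (S.map (Seg.shift Y)) = segSum Φ S := by
  rw [segSum, List.map_map]; rfl

lemma segW_split (h : AddW Φ) {s : Seg α} {n : ℕ} (hn : n ≤ s.word.length)
    (hs : s.color = 0 → s.word.length ≤ s.hi) :
    segW Φ (s.take n) + segW Φ (s.drop n) = segW Φ s := by
  simp only [segW, Seg.take, Seg.drop, List.length_take, List.length_drop, min_eq_left hn]
  have e : s.word.length = (s.word.length - n) + n := by omega
  by_cases h0 : s.color = 0
  · have := hs h0
    conv_rhs => rw [e, h.add]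
    rw [add_comm]
    congr 2 <;> omega
  · conv_rhs => rw [e, h.add]
    rw [add_comm]
    congr 1 <;> exact h.const _ h0 _ _ _
end
end FatBigon

namespace FatBigon
set_option linter.unusedSimpArgs false
open FreeGroup (invRev)
variable {α : Type*} {H : Type*} [Group H]

/-! ### Tilings -/

/-- A cell: an arc of length `ℓ` of the boundary subdivision of a diagram, with its two sides, of
colors `a` and `b`. If a side has color `0`, that is, if it is on the geodesic, then `la`, `lb`
is the starting point of the interval of the geodesic that the arc occupies. -/
structure Cell where
  a : ℕ
  b : ℕ
  ℓ : ℕ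
  la : ℕ
  lb : ℕ

/-- The conditions on a cell, when there are `N` colors: arcs between two relators are pieces, and
the ends of an arc between a relator and the geodesic side are vertices of the former. -/
structure CellOK (v : ℕ → H) (N : ℕ) (len : ℕ → ℕ) (pts : ℕ → Set H) (c : Cell) : Prop where
  a_lt : c.a < N
  b_lt : c.b < N
  small : c.a ≠ 0 → c.b ≠ 0 → 6 * c.ℓ < len c.a ∧ 6 * c.ℓ < len c.b
  va : c.a = 0 → c.b ≠ 0 → v c.la ∈ pts c.b ∧ v (c.la + c.ℓ) ∈ pts c.b
  vb : c.b = 0 → c.a ≠ 0 → v c.lb ∈ pts c.a ∧ v (c.lb + c.ℓ) ∈ pts c.a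

/-- The weight of a cell: both sides contribute. -/
def cellW (Φ : ℕ → ℕ → ℕ → ℕ) (c : Cell) : ℕ := Φ c.a c.la c.ℓ + Φ c.b c.lb c.ℓ

/-- The total weight of a list of cells. -/
def cellSum (Φ : ℕ → ℕ → ℕ → ℕ) (L : List Cell) : ℕ := (L.map (cellW Φ)).sum

/-- The weight measuring the total length of the sides of color `p`. -/
def tot (p : ℕ) : ℕ → ℕ → ℕ → ℕ := fun c _ n => if c = p then n else 0

/-- Any two points of `P` are joined by a word of length at most `n / 2`. -/
def Diam (φ : FreeGroup α →* H) (P : Set H) (n : ℕ) : Prop :=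
  ∀ x ∈ P, ∀ y ∈ P, ∃ l, x * φ (FreeGroup.mk l) = y ∧ 2 * l.length ≤ n

/-- A combinatorial substitute for a reduced van Kampen diagram with boundary segments `S`: there
are `F` inner faces, with the colors `M, …, M + F - 1`. The field `old` says that every outer
side is covered exactly by sides of cells, and `new` says the same of every inner face. -/
structure Tiling (φ : FreeGroup α →* H) (v : ℕ → H) (M : ℕ) (len : ℕ → ℕ) (pts : ℕ → Set H)
    (S : List (Seg α)) (F : ℕ) (len' : ℕ → ℕ) (pts' : ℕ → Set H) (L : List Cell) : Prop where
  agree_len : ∀ p < M, len' p = len p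
  agree_pts : ∀ p < M, pts' p = pts p
  cells_ok : ∀ c ∈ L, CellOK v (M + F) len' pts' c
  old : ∀ Φ, AddW Φ → (∀ p, M ≤ p → ∀ lo n, Φ p lo n = 0) → cellSum Φ L = segSum Φ S
  new : ∀ p, M ≤ p → p < M + F →
    cellSum (tot p) L = len' p ∧ 1 ≤ len' p ∧ Diam φ (pts' p) (len' p)

section
variable {v : ℕ → H} {M N : ℕ} {len len' : ℕ → ℕ} {pts pts' : ℕ → Set H}
  {Φ : ℕ → ℕ → ℕ → ℕ} {L L' : List Cell} {S : List (Seg α)}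

@[simp] lemma cellSum_nil : cellSum Φ [] = 0 := rfl
@[simp] lemma cellSum_cons (c : Cell) : cellSum Φ (c :: L) = cellW Φ c + cellSum Φ L := by
  simp [cellSum]
@[simp] lemma cellSum_append : cellSum Φ (L ++ L') = cellSum Φ L + cellSum Φ L' := by
  simp [cellSum]

lemma tot_addW (p : ℕ) : AddW (tot p) where
  add c lo m n := by simp only [tot]; split_ifs <;> rfl
  const c _ lo lo' n := rfl

lemma CellOK.mono {c : Cell} (h : CellOK v N len pts c) (hM : N ≤ M)
    (hl : ∀ p < N, len' p = len p) (hp : ∀ p < N, pts' p = pts p) : CellOK v M len' pts' c where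
  a_lt := h.a_lt.trans_le hM
  b_lt := h.b_lt.trans_le hM
  small := by rw [hl _ h.a_lt, hl _ h.b_lt]; exact h.small
  va := by rw [hp _ h.b_lt]; exact h.va
  vb := by rw [hp _ h.a_lt]; exact h.vb

lemma cellSum_tot_zero (h : ∀ c ∈ L, c.a < N ∧ c.b < N) {p : ℕ} (hp : N ≤ p) :
    cellSum (tot p) L = 0 := by
  induction L with
  | nil => rfl
  | cons c L ih =>
    have := h c (by simp)
    rw [cellSum_cons, ih fun c hc => h c (by simp [hc])]
    simp [cellW, tot, show c.a ≠ p by omega, show c.b ≠ p by omega]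

lemma segSum_tot_zero (h : ∀ s ∈ S, s.color < N) {p : ℕ} (hp : N ≤ p) :
    segSum (tot p) S = 0 := by
  induction S with
  | nil => rfl
  | cons s S ih =>
    have := h s (by simp)
    rw [segSum_cons, ih fun c hc => h c (by simp [hc])]
    simp [segW, tot, show s.color ≠ p by omega]

end

/-! ### Regions -/

section
variable {RL : Set (List (α × Bool))} {φ : FreeGroup α →* H} {v : ℕ → H} {k M : ℕ}
  {len : ℕ → ℕ} {pts : ℕ → Set H} {h0 : FreeGroup α} {S : List (Seg α)}

/-- A region of area exactly `k`, whose boundary is read along the segments `S` from the point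
`h0`, and satisfies the non-cancellation conditions with the outer faces. -/
structure Region (RL : Set (List (α × Bool))) (φ : FreeGroup α →* H) (v : ℕ → H) (k M : ℕ)
    (len : ℕ → ℕ) (pts : ℕ → Set H) (h0 : FreeGroup α) (S : List (Seg α)) : Prop where
  placed : Placed h0 S
  red : FreeGroup.IsReduced (flat S)
  ne : flat S ≠ []
  area : Ar RL k (h0 * FreeGroup.mk (flat S) * h0⁻¹)
  min : ∀ j < k, ¬ Ar RL j (h0 * FreeGroup.mk (flat S) * h0⁻¹)
  valid : Valid RL φ v k M len pts (h0 * FreeGroup.mk (flat S) * h0⁻¹) S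

/-- The assertion proved by induction: a region of area `k` and size `n` can be tiled, with the
bound on the number of cells that Euler's formula gives for planar diagrams. -/
def MainP (RL : Set (List (α × Bool))) (φ : FreeGroup α →* H) (v : ℕ → H) (k n : ℕ) : Prop :=
  ∀ M len pts h0 S, (flat S).length + S.length = n → Region RL φ v k M len pts h0 S →
    ∃ F len' pts' L, Tiling φ v M len pts S F len' pts' L ∧ L.length + 2 ≤ 3 * F + S.length ∧
      (CycRed (flat S) → L.length + 3 ≤ 3 * F + S.length)

lemma cut_list (S : List (Seg α)) : ∀ x u, flat S = x ++ u →
    (S = [] ∧ x = [] ∧ u = []) ∨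
    ∃ X s Y n, S = X ++ s :: Y ∧ n ≤ s.word.length ∧ x = flat X ++ s.word.take n ∧
      u = s.word.drop n ++ flat Y := by
  induction S with
  | nil => intro x u h; simp at h; exact .inl ⟨rfl, h⟩
  | cons s S ih =>
    intro x u h
    rw [flat_cons] at h
    rcases List.append_eq_append_iff.1 h with ⟨d, rfl, h'⟩ | ⟨d, h', rfl⟩
    · rcases ih _ _ h' with ⟨rfl, rfl, rfl⟩ | ⟨X, t, Y, n, rfl, hn, rfl, rfl⟩
      · exact .inr ⟨[], s, [], s.word.length, rfl, le_rfl, by simp, by simp⟩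
      · exact .inr ⟨s :: X, t, Y, n, rfl, hn, by simp, rfl⟩
    · exact .inr ⟨[], s, S, x.length, rfl, by simp [h'], by simp [h'], by simp [h']⟩

/-- A boundary can be cut at any point, at the cost of one additional segment. -/
lemma Region.cut (hRL : IsSC RL) (hφ : ∀ L ∈ RL, φ (FreeGroup.mk L) = 1)
    (h : Region RL φ v k M len pts h0 S) {x u : List (α × Bool)} (hxu : flat S = x ++ u) :
    ∃ S₁ S₂, flat S₁ = x ∧ flat S₂ = u ∧ Placed h0 S₁ ∧ Placed (h0 * FreeGroup.mk x) S₂ ∧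
      Valid RL φ v k M len pts (h0 * FreeGroup.mk (flat S) * h0⁻¹) (S₁ ++ S₂) ∧
      S₁.length + S₂.length ≤ S.length + 1 ∧ S₁.length ≤ S.length ∧ S₂.length ≤ S.length ∧
      ∀ Φ, AddW Φ → segSum Φ S₁ + segSum Φ S₂ = segSum Φ S := by
  rcases cut_list S x u hxu with ⟨rfl, -, -⟩ | ⟨X, s, Y, n, rfl, hn, rfl, rfl⟩
  · exact absurd rfl h.ne
  have hp := h.placed
  rw [placed_append] at hp
  refine ⟨X ++ [s.take n], s.drop n :: Y, by simp [Seg.take], by simp [Seg.drop], ?_, ?_, ?_,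
    by simp; omega, by simp, by simp, ?_⟩
  · rw [placed_append]
    exact ⟨hp.1, hp.2.1, trivial⟩
  · refine ⟨?_, ?_⟩
    · change s.pos * _ = _
      rw [hp.2.1, mk_app, mul_assoc]
    · have := hp.2.2
      convert this using 1
      rw [mk_app, mul_assoc, mul_assoc, mul_assoc]
      congr 2
      rw [← mk_app]
      simp [Seg.drop]
  · have := h.valid.split hRL hφ hn
    simpa using this
  · intro Φ hΦ
    have := segW_split hΦ hn (h.valid.ok s (by simp)).le_hi
    simp only [segSum_append, segSum_cons, segSum_nil, ← this]
    omega

lemma Region.k_pos (h : Region RL φ v k M len pts h0 S) : 0 < k := by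
  rcases Nat.eq_zero_or_pos k with rfl | hk
  · exfalso
    have h1 := h.area.zero
    have h2 : FreeGroup.mk (flat S) = 1 := by
      have : FreeGroup.mk (flat S) = h0⁻¹ * (h0 * FreeGroup.mk (flat S) * h0⁻¹) * h0 := by group
      rw [this, h1]; group
    classical
    have h3 := h.red.reduce_eq
    rw [← FreeGroup.toWord_mk, h2, FreeGroup.toWord_one] at h3
    exact h.ne h3.symm
  · exact hk

/-- Two regions joined at a point: their tilings are put side by side. -/
lemma step_bridge (hRL : IsSC RL) (hφ : ∀ L ∈ RL, φ (FreeGroup.mk L) = 1)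
    (IH : ∀ k' n', (k' < k ∨ k' = k ∧ n' < (flat S).length + S.length) → MainP RL φ v k' n')
    (h : Region RL φ v k M len pts h0 S) {x u : List (α × Bool)} (hxu : flat S = x ++ u)
    (hx : x ≠ []) (hu : u ≠ []) {i j : ℕ} (hi : Ar RL i (FreeGroup.mk x))
    (hj : Ar RL j (FreeGroup.mk u)) (hij : i + j ≤ k) :
    ∃ F len' pts' L, Tiling φ v M len pts S F len' pts' L ∧
      L.length + 3 ≤ 3 * F + S.length := by
  obtain ⟨S₁, S₂, hf1, hf2, hp1, hp2, hV, hl, hl1, hl2, hw⟩ := h.cut hRL hφ hxu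
  have hxl : 0 < x.length := List.length_pos_iff.2 hx
  have hul : 0 < u.length := List.length_pos_iff.2 hu
  have hlen : (flat S).length = x.length + u.length := by rw [hxu, List.length_append]
  have hmin := h.min
  have hred := h.red
  have harea := h.area
  rw [hxu] at hmin hred hV
  -- areas of the two parts add up exactly
  have hk : k = i + j := by
    by_contra hne
    refine hmin (i + j) (by omega) ?_
    rw [mk_app]
    exact (hi.prod hj).conj h0
  set g₁ := h0 * FreeGroup.mk x * h0⁻¹ with hg1
  set g₂ := h0 * FreeGroup.mk x * FreeGroup.mk u * (h0 * FreeGroup.mk x)⁻¹ with hg2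
  have hg : h0 * FreeGroup.mk (x ++ u) * h0⁻¹ = g₂ * g₁ := by
    rw [mk_app, hg1, hg2]; group
  have hA1 : Ar RL i g₁ := hi.conj h0
  have hA2 : Ar RL j g₂ := hj.conj (h0 * FreeGroup.mk x)
  rw [hg] at hmin hV
  have H1 : ∀ y l, Ar RL l (y * g₁) → Ar RL (l + j) (y * (g₂ * g₁)) := by
    intro y l hy
    have := (hA2.conj y).prod hy
    rw [add_comm j l] at this
    exact this.of_eq (by group)
  have H2 : ∀ y l, Ar RL l (y * g₂) → Ar RL (l + i) (y * (g₂ * g₁)) := by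
    intro y l hy
    exact (hy.prod hA1).of_eq (by group)
  have R1 : Region RL φ v i M len pts h0 S₁ := by
    refine ⟨hp1, hf1 ▸ red_left hred, hf1 ▸ hx, hf1 ▸ hA1, ?_, ?_⟩
    · rw [hf1]; intro l hl hA
      exact hmin (l + j) (by omega) ((H1 1 l (hA.of_eq (one_mul _).symm)).of_eq (one_mul _))
    · rw [hf1]
      exact (hV.sublist (List.sublist_append_left _ _)).restrict hk le_rfl (fun _ _ => rfl)
        (fun _ _ => rfl) H1
  obtain ⟨F₁, len₁, pts₁, L₁, T1, hb1, -⟩ := IH i _ (by rw [hf1]; omega) M len pts h0 S₁ rfl R1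
  have R2 : Region RL φ v j (M + F₁) len₁ pts₁ (h0 * FreeGroup.mk x) S₂ := by
    refine ⟨hp2, hf2 ▸ red_right hred, hf2 ▸ hu, hf2 ▸ hA2, ?_, ?_⟩
    · rw [hf2]; intro l hl hA
      exact hmin (l + i) (by omega) ((H2 1 l (hA.of_eq (one_mul _).symm)).of_eq (one_mul _))
    · rw [hf2]
      exact (hV.sublist (List.sublist_append_right _ _)).restrict (hk.trans (add_comm _ _))
        (Nat.le_add_right _ _) T1.agree_len T1.agree_pts H2
  obtain ⟨F₂, len₂, pts₂, L₂, T2, hb2, -⟩ := IH j _ (by rw [hf2]; omega) _ _ _ _ S₂ rfl R2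
  have hS2 : ∀ s ∈ S₂, s.color < M := fun s hs => (hV.ok s (by simp [hs])).color_lt
  refine ⟨F₁ + F₂, len₂, pts₂, L₁ ++ L₂, ⟨?_, ?_, ?_, ?_, ?_⟩, by simp; omega⟩
  · intro p hp
    rw [T2.agree_len p (by omega), T1.agree_len p hp]
  · intro p hp
    rw [T2.agree_pts p (by omega), T1.agree_pts p hp]
  · intro c hc
    rcases List.mem_append.1 hc with hc | hc
    · exact (T1.cells_ok c hc).mono (by omega) T2.agree_len T2.agree_pts
    · rw [← add_assoc]; exact T2.cells_ok c hc
  · intro Φ hΦ h'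
    rw [cellSum_append, T1.old Φ hΦ h', T2.old Φ hΦ (fun p hp => h' p (by omega)), hw Φ hΦ]
  · intro p hp1 hp2
    rw [cellSum_append]
    rcases lt_or_ge p (M + F₁) with hp | hp
    · have h1 : cellSum (tot p) L₂ = segSum (tot p) S₂ := T2.old _ (tot_addW p) (by
        intro q hq lo n
        simp [tot, show q ≠ p by omega])
      rw [h1, segSum_tot_zero hS2 hp1, add_zero, T2.agree_len p hp, T2.agree_pts p hp]
      exact T1.new p hp1 hp
    · rw [cellSum_tot_zero (fun c hc => ⟨(T1.cells_ok c hc).a_lt, (T1.cells_ok c hc).b_lt⟩) hp,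
        zero_add]
      exact T2.new p hp (by omega)

end
end FatBigon

namespace FatBigon
set_option linter.unusedSimpArgs false
open FreeGroup (invRev)
variable {α : Type*} {H : Type*} [Group H]
variable {RL : Set (List (α × Bool))} {φ : FreeGroup α →* H} {v : ℕ → H} {k M : ℕ}
  {len : ℕ → ℕ} {pts : ℕ → Set H} {h0 : FreeGroup α} {S : List (Seg α)}

lemma mk_map_one (hφ : ∀ L ∈ RL, φ (FreeGroup.mk L) = 1) {k : ℕ} {x : FreeGroup α}
    (h : Ar RL k x) : φ x = 1 := by
  induction h with
  | one => exact map_one φ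
  | mul g hL _ ih => simp [ih, hφ _ hL]

/-- The vertices of a relator loop have diameter at most half of its length. -/
lemma diam_rel (hRL : IsSC RL) (hφ : ∀ L ∈ RL, φ (FreeGroup.mk L) = 1) (h0 : FreeGroup α)
    {t : List (α × Bool)} (ht : t ∈ RL) :
    Diam φ {y | ∃ a, a <+: t ∧ y = φ (h0 * FreeGroup.mk a)} t.length := by
  have key : ∀ a m b, t = a ++ m ++ b →
      ∃ l, φ (FreeGroup.mk l) = φ (FreeGroup.mk m) ∧ 2 * l.length ≤ t.length := by
    rintro a m b rfl
    by_cases hm : 2 * m.length ≤ (a ++ m ++ b).length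
    · exact ⟨m, rfl, hm⟩
    · have h1 : m ++ (b ++ a) ∈ RL := by
        have := hRL.rot a (m ++ b) (by simpa using ht)
        simpa using this
      refine ⟨invRev (b ++ a), ?_, by simp at hm ⊢; omega⟩
      have := hφ _ h1
      rw [mk_app, map_mul] at this
      rw [mk_inv, map_inv]
      exact (eq_inv_of_mul_eq_one_left this).symm
  rintro _ ⟨a, ⟨r, hr⟩, rfl⟩ _ ⟨b, ⟨r', hr'⟩, rfl⟩
  rcases List.append_eq_append_iff.1 (hr.trans hr'.symm) with ⟨d, rfl, rfl⟩ | ⟨d, rfl, rfl⟩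
  · obtain ⟨l, h1, h2⟩ := key a d r' hr'.symm
    exact ⟨l, by rw [← map_mul, mk_app, ← mul_assoc, map_mul, h1, ← map_mul], h2⟩
  · obtain ⟨l, h1, h2⟩ := key b d r hr.symm
    refine ⟨invRev l, ?_, by simpa using h2⟩
    rw [mk_inv, map_inv, h1, ← map_inv, ← map_mul, mk_app]
    congr 1; group

/-- The cell between a segment and a new face of color `M`. -/
def faceCell (M : ℕ) (s : Seg α) : Cell := ⟨s.color, M, s.word.length, s.hi - s.word.length, 0⟩

lemma faceCell_sum {Φ : ℕ → ℕ → ℕ → ℕ} (h : ∀ lo n, Φ M lo n = 0) (S : List (Seg α)) :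
    cellSum Φ (S.map (faceCell M)) = segSum Φ S := by
  induction S with
  | nil => rfl
  | cons s S ih => simp [ih, cellW, faceCell, segW, h]

lemma faceCell_tot (S : List (Seg α)) (h : ∀ s ∈ S, s.color < M) :
    cellSum (tot M) (S.map (faceCell M)) = (flat S).length := by
  induction S with
  | nil => rfl
  | cons s S ih =>
    have h1 := h s (by simp)
    have h2 := ih (fun s hs => h s (by simp [hs]))
    simp [h2, cellW, faceCell, tot, show s.color ≠ M by omega]

lemma segSum_empty {Φ : ℕ → ℕ → ℕ → ℕ} (h : AddW Φ) {S : List (Seg α)} (hS : flat S = []) :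
    segSum Φ S = 0 := by
  induction S with
  | nil => rfl
  | cons s S ih =>
    simp only [flat_cons, List.append_eq_nil_iff] at hS
    rw [segSum_cons, ih hS.2, segW, hS.1, List.length_nil, h.zero]

lemma placed_split {h0 : FreeGroup α} {S : List (Seg α)} {s : Seg α} (hp : Placed h0 S)
    (hs : s ∈ S) : ∃ P Q, flat S = P ++ (s.word ++ Q) ∧ s.pos = h0 * FreeGroup.mk P := by
  obtain ⟨X, Y, rfl⟩ := List.append_of_mem hs
  rw [placed_append] at hp
  exact ⟨flat X, flat Y, by simp, hp.2.1⟩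

/-- A region with a face `t = x c` along the initial part `x` of the boundary: the face is removed,
and the initial part becomes one cell for each of its segments. -/
lemma step_face (hRL : IsSC RL) (hφ : ∀ L ∈ RL, φ (FreeGroup.mk L) = 1) {k' : ℕ} (hk : k = k' + 1)
    (IH : ∀ n', MainP RL φ v k' n')
    (h : Region RL φ v k M len pts h0 S) {x u c : List (α × Bool)} (hxu : flat S = x ++ u)
    (hx : x ≠ []) (hc : x ++ c ∈ RL) (hA : Ar RL k' (FreeGroup.mk (invRev c ++ u)))
    (hr : FreeGroup.IsReduced (invRev c ++ u)) :
    ∃ F len' pts' L, Tiling φ v M len pts S F len' pts' L ∧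
      L.length + 3 ≤ 3 * F + S.length := by
  obtain ⟨S₁, S₂, hf1, hf2, hp1, hp2, hV, hl, hl1, hl2, hw⟩ := h.cut hRL hφ hxu
  have hmin := h.min
  rw [hxu] at hmin hV
  set g := h0 * FreeGroup.mk (x ++ u) * h0⁻¹ with hg
  set Y := h0 * (FreeGroup.mk (x ++ c))⁻¹ * h0⁻¹ with hYdef
  have hφY : φ Y = 1 := by
    rw [hYdef, map_mul, map_mul, map_inv φ (FreeGroup.mk (x ++ c)), hφ _ hc, map_inv]; simp
  have hYg : Y * g = h0 * FreeGroup.mk (invRev c ++ u) * h0⁻¹ := by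
    rw [hYdef, hg]; simp only [mk_app, mk_inv]; group
  have hAY : Ar RL k' (Y * g) := by rw [hYg]; exact hA.conj h0
  have hYinv : ∀ y : FreeGroup α, Ar RL 1 (y * Y⁻¹ * y⁻¹) := by
    intro y
    exact (Ar.relConj hc (y * h0)).of_eq (by rw [hYdef]; group)
  have hlen0 : (x ++ c).length = x.length + c.length := List.length_append
  set len₁ : ℕ → ℕ := Function.update len M (x ++ c).length with hlen1
  set pts₁ : ℕ → Set H :=
    Function.update pts M {y | ∃ a, a <+: x ++ c ∧ y = φ (h0 * FreeGroup.mk a)} with hpts1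
  have el : ∀ p < M, len₁ p = len p := fun p hp => Function.update_of_ne (by omega) _ _
  have ep : ∀ p < M, pts₁ p = pts p := fun p hp => Function.update_of_ne (by omega) _ _
  have elM : len₁ M = (x ++ c).length := Function.update_self ..
  have epM : pts₁ M = {y | ∃ a, a <+: x ++ c ∧ y = φ (h0 * FreeGroup.mk a)} :=
    Function.update_self ..
  have hM : 0 < M := by
    obtain ⟨s, hs⟩ : ∃ s, s ∈ S₁ := by
      rcases S₁ with _ | ⟨s, S₁⟩
      · exact absurd hf1.symm hx
      · exact ⟨s, by simp⟩
    exact (Nat.zero_le _).trans_lt (hV.ok s (by simp [hs])).color_lt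
  have hcol1 : ∀ s ∈ S₁, s.color < M := fun s hs => (hV.ok s (by simp [hs])).color_lt
  have hcol2 : ∀ s ∈ S₂, s.color < M := fun s hs => (hV.ok s (by simp [hs])).color_lt
  have hdiam := diam_rel hRL hφ h0 hc
  -- the cells along the new face
  have hcells : ∀ s ∈ S₁, CellOK v (M + 1) len₁ pts₁ (faceCell M s) := by
    intro s hs
    have hok := hV.ok s (by simp [hs])
    obtain ⟨P, Q, hPQ, hpos⟩ := placed_split hp1 hs
    rw [hf1] at hPQ
    refine ⟨hok.color_lt.trans (Nat.lt_succ_self M), Nat.lt_succ_self M, fun h1 _ => ?_,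
      fun h1 _ => ?_, fun h1 _ => ?_⟩
    · change 6 * s.word.length < len₁ s.color ∧ 6 * s.word.length < len₁ M
      rw [el _ hok.color_lt, elM, ← hok.len_eq h1]
      have ht : s.word ++ Q ++ c ++ P ∈ RL := by
        have := hRL.rot P (s.word ++ Q ++ c) (by rw [hPQ] at hc; simpa using hc)
        simpa using this
      have hne : s.rel ≠ s.word ++ Q ++ c ++ P := by
        intro e
        refine hok.c1 h1 k' (by omega) (hAY.of_eq ?_)
        congr 1
        rw [Seg.loop, e, hpos, hYdef, hPQ]
        simp only [mk_app]; group
      have h3 := hRL.sc _ (hok.rel_mem h1) _ ht hne s.word (hok.pre h1) ⟨Q ++ c ++ P, by simp⟩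
      have h4 := hRL.sc _ ht _ (hok.rel_mem h1) hne.symm s.word ⟨Q ++ c ++ P, by simp⟩ (hok.pre h1)
      refine ⟨h3, h4.trans_eq ?_⟩
      rw [hPQ]; simp; omega
    · change s.color = 0 at h1
      change v (s.hi - s.word.length) ∈ pts₁ M ∧
        v (s.hi - s.word.length + s.word.length) ∈ pts₁ M
      rw [epM, Nat.sub_add_cancel (hok.le_hi h1), ← hok.geo h1 _ (List.prefix_refl _)]
      have h3 := hok.geo h1 [] (List.nil_prefix)
      rw [List.length_nil, Nat.sub_zero] at h3
      rw [← h3, hpos]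
      refine ⟨⟨P ++ s.word, ⟨Q ++ c, by rw [hPQ]; simp⟩, by rw [mk_app, mul_assoc]⟩,
        ⟨P, ⟨s.word ++ (Q ++ c), by rw [hPQ]; simp⟩, by rw [mk_nil, mul_one]⟩⟩
    · change M = 0 at h1
      omega
  -- finishing from a tiling of the rest
  have fin : ∀ F' len' pts' L', Tiling φ v (M + 1) len₁ pts₁
        ((⟨M, invRev c, invRev (x ++ c), 0, h0⟩ : Seg α) :: S₂.map (Seg.shift Y)) F' len' pts' L' →
      L'.length + S₁.length ≤ 3 * F' + S.length →
      ∃ F len' pts' L, Tiling φ v M len pts S F len' pts' L ∧ L.length + 3 ≤ 3 * F + S.length := by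
    intro F' len' pts' L' T hb
    refine ⟨F' + 1, len', pts', S₁.map (faceCell M) ++ L', ⟨?_, ?_, ?_, ?_, ?_⟩, by simp; omega⟩
    · intro p hp
      rw [T.agree_len p (by omega), el p hp]
    · intro p hp
      rw [T.agree_pts p (by omega), ep p hp]
    · intro d hd
      rw [show M + (F' + 1) = M + 1 + F' by omega]
      rcases List.mem_append.1 hd with hd | hd
      · obtain ⟨s, hs, rfl⟩ := List.mem_map.1 hd
        exact (hcells s hs).mono (by omega) T.agree_len T.agree_pts
      · exact T.cells_ok d hd
    · intro Φ hΦ h'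
      rw [cellSum_append, faceCell_sum (h' M le_rfl), T.old Φ hΦ (fun p hp => h' p (by omega)),
        segSum_cons, segSum_shift, segW, h' M le_rfl, zero_add, hw Φ hΦ]
    · intro p hp1 hp2
      rw [cellSum_append]
      rcases Nat.eq_or_lt_of_le hp1 with rfl | hp
      · rw [faceCell_tot S₁ hcol1, hf1, T.old _ (tot_addW M) (by
          intro q hq lo n
          simp [tot, show q ≠ M by omega]), segSum_cons, segSum_shift,
          segSum_tot_zero hcol2 le_rfl, T.agree_len M (by omega), T.agree_pts M (by omega), elM, epM]
        refine ⟨by simp [segW, tot], ?_, hdiam⟩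
        have := List.length_pos_iff.2 hx
        omega
      · rw [cellSum_tot_zero (N := M + 1), zero_add]
        · exact T.new p (by omega) (by omega)
        · intro d hd
          obtain ⟨s, hs, rfl⟩ := List.mem_map.1 hd
          exact ⟨(hcells s hs).a_lt, (hcells s hs).b_lt⟩
        · omega
  by_cases hcu : invRev c ++ u = []
  · have hcu' := List.append_eq_nil_iff.1 hcu
    refine fin 0 len₁ pts₁ [] ⟨fun _ _ => rfl, fun _ _ => rfl, by simp, ?_, ?_⟩ (by simp; omega)
    · intro Φ hΦ _
      rw [segSum_empty hΦ (by simp [hf2, hcu])]; rfl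
    · intro p h1 h2; omega
  have hval : Valid RL φ v k' (M + 1) len₁ pts₁ (Y * g)
      ((⟨M, invRev c, invRev (x ++ c), 0, h0⟩ : Seg α) :: S₂.map (Seg.shift Y)) := by
    have hold : Valid RL φ v k' (M + 1) len₁ pts₁ (Y * g) (S₂.map (Seg.shift Y)) := by
      refine (hV.sublist (List.sublist_append_right _ _)).shift hk (by omega) el ep hφY ?_
      intro z i hz
      exact ((hYinv Y⁻¹).prod ((hz.conj Y⁻¹).comm)).mono (by omega) |>.of_eq (by group)
    have hloop : (⟨M, invRev c, invRev (x ++ c), 0, h0⟩ : Seg α).loop = Y := by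
      rw [Seg.loop, hYdef, mk_inv]
    have hcolM : ∀ s ∈ S₂.map (Seg.shift Y), s.color < M := by
      intro s hs
      obtain ⟨t, ht, rfl⟩ := List.mem_map.1 hs
      exact hcol2 t ht
    refine ⟨?_, List.pairwise_cons.2 ⟨?_, hold.pairs⟩⟩
    · intro s hs
      rcases List.mem_cons.1 hs with rfl | hs
      swap
      · exact hold.ok s hs
      refine ⟨Nat.lt_succ_self M, fun _ => hRL.inv _ hc, fun _ => ?_, fun _ => ?_, fun _ a ha => ?_,
        fun _ j hj hA => ?_, fun h => absurd h (by simp; omega), fun h => absurd h (by simp; omega)⟩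
      · exact ⟨invRev x, by simp [inv_app]⟩
      · change (invRev (x ++ c)).length = len₁ M
        rw [elM, FreeGroup.invRev_length]
      · change φ (h0 * FreeGroup.mk a) ∈ pts₁ M
        obtain ⟨b, hb⟩ := ha
        change a ++ b = invRev (x ++ c) at hb
        have e : x ++ c = invRev b ++ invRev a := by rw [← inv_app, hb, inv_inv]
        rw [epM]
        refine ⟨invRev b, ⟨invRev a, e.symm⟩, ?_⟩
        have h1 := hφ _ (e ▸ hc)
        rw [mk_app, map_mul] at h1
        rw [map_mul, map_mul, eq_inv_of_mul_eq_one_left h1, mk_inv, map_inv, _root_.inv_inv]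
      · rw [hloop] at hA
        exact hmin j (by omega) (hA.of_eq (by group))
    · intro s hs _ h2
      refine ⟨fun e => absurd e ?_, fun _ j hj hA => ?_⟩
      · have := hcolM s hs
        change M ≠ s.color
        omega
      obtain ⟨t, ht, rfl⟩ := List.mem_map.1 hs
      rw [hloop] at hA
      refine (hV.ok t (by simp [ht])).c1 h2 j (by omega) (hA.of_eq ?_)
      simp only [Seg.loop, Seg.shift]; group
  have hflat : flat ((⟨M, invRev c, invRev (x ++ c), 0, h0⟩ : Seg α) :: S₂.map (Seg.shift Y)) =
      invRev c ++ u := by simp [hf2]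
  have hR : Region RL φ v k' (M + 1) len₁ pts₁ h0
      ((⟨M, invRev c, invRev (x ++ c), 0, h0⟩ : Seg α) :: S₂.map (Seg.shift Y)) := by
    refine ⟨⟨rfl, ?_⟩, hflat ▸ hr, hflat ▸ hcu, ?_, ?_, ?_⟩
    · have := placed_shift Y hp2
      convert this using 1
      rw [hYdef]; simp only [mk_app, mk_inv]; group
    · rw [hflat, ← hYg]; exact hAY
    · rw [hflat, ← hYg]
      intro j hj hA
      exact hmin (j + 1) (by omega) (((hYinv 1).prod hA |>.of_eq (by group)).mono (by omega))
    · rw [hflat, ← hYg]; exact hval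
  obtain ⟨F', len', pts', L', T, hb, -⟩ := IH _ (M + 1) len₁ pts₁ h0 _ rfl hR
  refine fin F' len' pts' L' T ?_
  simp at hb; omega

end FatBigon

namespace FatBigon
set_option linter.unusedSimpArgs false
open FreeGroup (invRev)
variable {α : Type*} {H : Type*} [Group H]
variable {RL : Set (List (α × Bool))} {φ : FreeGroup α →* H} {v : ℕ → H} {k M : ℕ}
  {len : ℕ → ℕ} {pts : ℕ → Set H} {h0 : FreeGroup α} {S T : List (Seg α)}

lemma Tiling.congr {F : ℕ} {len' : ℕ → ℕ} {pts' : ℕ → Set H} {L : List Cell}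
    (h : Tiling φ v M len pts S F len' pts' L)
    (hST : ∀ Φ, AddW Φ → segSum Φ S = segSum Φ T) : Tiling φ v M len pts T F len' pts' L :=
  ⟨h.agree_len, h.agree_pts, h.cells_ok, fun Φ hΦ h' => (h.old Φ hΦ h').trans (hST Φ hΦ), h.new⟩

lemma Region.split (hRL : IsSC RL) (hφ : ∀ L ∈ RL, φ (FreeGroup.mk L) = 1) {X Y : List (Seg α)}
    {s : Seg α} (h : Region RL φ v k M len pts h0 (X ++ s :: Y)) {n : ℕ} (hn : n ≤ s.word.length) :
    Region RL φ v k M len pts h0 (X ++ s.take n :: s.drop n :: Y) ∧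
      ∀ Φ, AddW Φ → segSum Φ (X ++ s.take n :: s.drop n :: Y) = segSum Φ (X ++ s :: Y) := by
  have hf : flat (X ++ s.take n :: s.drop n :: Y) = flat (X ++ s :: Y) := by
    simp only [flat_append, flat_cons, Seg.take, Seg.drop]
    rw [← List.append_assoc (List.take _ _), List.take_append_drop]
  have hp := h.placed
  rw [placed_append] at hp
  refine ⟨⟨?_, hf ▸ h.red, hf ▸ h.ne, hf ▸ h.area, hf ▸ h.min, hf ▸ h.valid.split hRL hφ hn⟩, ?_⟩
  · rw [placed_append]
    refine ⟨hp.1, hp.2.1, ?_, ?_⟩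
    · change s.pos * _ = _
      rw [hp.2.1]; rfl
    · have := hp.2.2
      convert this using 1
      rw [mul_assoc, ← mk_app]
      simp [Seg.take, Seg.drop]
  · intro Φ hΦ
    have := segW_split hΦ hn (h.valid.ok s (by simp)).le_hi
    simp only [segSum_append, segSum_cons]
    omega

lemma Region.drop_empty {X Y : List (Seg α)} {s : Seg α}
    (h : Region RL φ v k M len pts h0 (X ++ s :: Y)) (hs : s.word = []) :
    Region RL φ v k M len pts h0 (X ++ Y) ∧
      ∀ Φ, AddW Φ → segSum Φ (X ++ Y) = segSum Φ (X ++ s :: Y) := by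
  have hf : flat (X ++ s :: Y) = flat (X ++ Y) := by simp [hs]
  have hp := h.placed
  rw [placed_append] at hp
  have hv := h.valid.sublist (T := X ++ Y)
    (List.Sublist.append_left (List.sublist_cons_self _ _) _)
  refine ⟨⟨?_, hf ▸ h.red, hf ▸ h.ne, hf ▸ h.area, hf ▸ h.min, hf ▸ hv⟩, fun Φ hΦ => ?_⟩
  · rw [placed_append]
    refine ⟨hp.1, ?_⟩
    have := hp.2.2
    rwa [hs, mk_nil, mul_one] at this
  · simp [segW, hs, hΦ.zero]

/-- Two boundary segments with inverse labels at the base point are glued together. The rest of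
the boundary bounds a region of the same area. -/
lemma fold_region {s e : Seg α} {y : List (α × Bool)}
    (h : Region RL φ v k M len pts h0 (s :: (S ++ [e]))) (hs : s.word = y)
    (he : e.word = invRev y) (hS : flat S ≠ []) :
    Region RL φ v k M len pts (h0 * FreeGroup.mk y) S := by
  have hf : flat (s :: (S ++ [e])) = y ++ flat S ++ invRev y := by simp [hs, he]
  have hg : h0 * FreeGroup.mk (flat (s :: (S ++ [e]))) * h0⁻¹ =
      h0 * FreeGroup.mk y * FreeGroup.mk (flat S) * (h0 * FreeGroup.mk y)⁻¹ := by
    rw [hf]; simp only [mk_app, mk_inv]; group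
  have hp := h.placed.2
  rw [placed_append, hs] at hp
  have hr := h.red
  rw [hf] at hr
  have hv := h.valid.sublist (T := S)
    ((List.sublist_append_left _ _).trans (List.sublist_cons_self _ _))
  exact ⟨hp.1, red_mid hr, hS, hg ▸ h.area, hg ▸ h.min, hg ▸ hv⟩

/-- In the situation of `fold_region`, a tiling of the rest of the boundary yields one of the whole,
with one more cell. -/
lemma step_fold (hRL : IsSC RL) (hφ : ∀ L ∈ RL, φ (FreeGroup.mk L) = 1) {s e : Seg α}
    {y : List (α × Bool)}
    (h : Region RL φ v k M len pts h0 (s :: (S ++ [e]))) (hs : s.word = y)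
    (he : e.word = invRev y) {F : ℕ} {len' : ℕ → ℕ} {pts' : ℕ → Set H}
    {L : List Cell} (T : Tiling φ v M len pts S F len' pts' L) :
    ∃ L', Tiling φ v M len pts (s :: (S ++ [e])) F len' pts' L' ∧ L'.length = L.length + 1 := by
  have hf : flat (s :: (S ++ [e])) = y ++ flat S ++ invRev y := by simp [hs, he]
  have hos := h.valid.ok s (by simp)
  have hoe := h.valid.ok e (by simp)
  have hps : s.pos = h0 := h.placed.1
  have hpe : e.pos = h0 * FreeGroup.mk y * FreeGroup.mk (flat S) := by
    have := h.placed.2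
    rw [placed_append, hs] at this
    exact this.2.1
  have hpair : SegPair RL k (h0 * FreeGroup.mk (flat (s :: (S ++ [e]))) * h0⁻¹) s e :=
    (List.pairwise_cons.1 h.valid.pairs).1 e (by simp)
  have harea := h.area
  have hφg := mk_map_one hφ h.area
  rw [hf] at hpair harea hφg
  -- the ends of the loop have the same images
  have hB : φ (h0 * FreeGroup.mk y * FreeGroup.mk (flat S)) = φ (h0 * FreeGroup.mk y) := by
    rw [← one_mul (φ (h0 * FreeGroup.mk y)), ← hφg, ← map_mul]
    congr 1; simp only [mk_app, mk_inv]; group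
  have hB2 : φ (h0 * FreeGroup.mk y * FreeGroup.mk (flat S) * FreeGroup.mk (invRev y)) = φ h0 := by
    rw [map_mul, hB, ← map_mul, mk_inv]; congr 1; group
  set c : Cell := ⟨s.color, e.color, y.length, s.hi - y.length, e.hi - y.length⟩ with hc
  have hcok : CellOK v M len pts c := by
    refine ⟨hos.color_lt, hoe.color_lt, fun h1 h2 => ?_, fun h1 h2 => ?_, fun h1 h2 => ?_⟩
    · change s.color ≠ 0 at h1
      change e.color ≠ 0 at h2
      change 6 * y.length < len s.color ∧ 6 * y.length < len e.color
      obtain ⟨ρ, hρ⟩ := hos.pre h1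
      obtain ⟨ζ, hζ⟩ := hoe.pre h2
      rw [hs] at hρ
      rw [he] at hζ
      have ho : y ++ invRev ζ ∈ RL := by
        have := hRL.inv _ (hoe.rel_mem h2)
        rw [← hζ, inv_app, inv_inv] at this
        exact hRL.rot _ _ this
      have hro : y ++ invRev ζ ~r invRev e.rel := by
        rw [← hζ, inv_app, inv_inv]; exact rotated_app _ _
      have hne : s.rel ≠ y ++ invRev ζ := by
        intro hEq
        by_cases hcol : s.color = e.color
        · have h3 := (hpair h1 h2).1 hcol
          rw [hEq] at h3
          exact not_isRotated_inv hRL (hoe.rel_mem h2) (h3.symm.trans hro)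
        · refine (hpair h1 h2).2 hcol k le_rfl
            ((harea.conj (h0 * FreeGroup.mk (y ++ invRev ζ) * h0⁻¹)⁻¹).of_eq ?_)
          rw [Seg.loop, Seg.loop, hps, hpe, hEq, ← hζ]
          simp only [mk_app, mk_inv]; group
      have h3 := hRL.sc _ (hos.rel_mem h1) _ ho hne y ⟨ρ, hρ⟩ ⟨_, rfl⟩
      have h4 := hRL.sc _ ho _ (hos.rel_mem h1) hne.symm y ⟨_, rfl⟩ ⟨ρ, hρ⟩
      rw [hos.len_eq h1] at h3
      refine ⟨h3, h4.trans_eq ?_⟩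
      rw [← hoe.len_eq h2, ← hζ]; simp
    · change s.color = 0 at h1
      change e.color ≠ 0 at h2
      change v (s.hi - y.length) ∈ pts e.color ∧ v (s.hi - y.length + y.length) ∈ pts e.color
      have h3 := hos.le_hi h1
      have h4 := hos.geo h1 _ (List.prefix_refl _)
      have h5 := hos.geo h1 [] List.nil_prefix
      have h6 := hoe.pts_mem h2 [] List.nil_prefix
      have h7 := hoe.pts_mem h2 _ (hoe.pre h2)
      rw [hs] at h3 h4
      rw [he] at h7
      rw [List.length_nil, Nat.sub_zero, mk_nil, mul_one, hps] at h5
      rw [Nat.sub_add_cancel h3, ← h4, ← h5, hps]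
      rw [mk_nil, mul_one, hpe, hB] at h6
      rw [hpe, hB2] at h7
      exact ⟨h6, h7⟩
    · change e.color = 0 at h1
      change s.color ≠ 0 at h2
      change v (e.hi - y.length) ∈ pts s.color ∧ v (e.hi - y.length + y.length) ∈ pts s.color
      have h3 := hoe.le_hi h1
      have h4 := hoe.geo h1 _ (List.prefix_refl _)
      have h5 := hoe.geo h1 [] List.nil_prefix
      have h6 := hos.pts_mem h2 [] List.nil_prefix
      have h7 := hos.pts_mem h2 _ (hos.pre h2)
      rw [he, FreeGroup.invRev_length] at h3 h4
      rw [hs] at h7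
      rw [List.length_nil, Nat.sub_zero, mk_nil, mul_one, hpe, hB] at h5
      rw [Nat.sub_add_cancel h3, ← h4, ← h5, hpe, hB2]
      rw [mk_nil, mul_one, hps] at h6
      rw [hps] at h7
      exact ⟨h6, h7⟩
  refine ⟨c :: L, ⟨T.agree_len, T.agree_pts, ?_, ?_, ?_⟩, rfl⟩
  · intro d hd
    rcases List.mem_cons.1 hd with rfl | hd
    · exact hcok.mono (by omega) T.agree_len T.agree_pts
    · exact T.cells_ok d hd
  · intro Φ hΦ h'
    rw [cellSum_cons, T.old Φ hΦ h']
    simp only [segSum_cons, segSum_append, segSum_nil, segW, hs, he, cellW, hc,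
      FreeGroup.invRev_length]
    omega
  · intro p hp1 hp2
    obtain ⟨h1, h2⟩ := T.new p hp1 hp2
    refine ⟨?_, h2⟩
    rw [cellSum_cons, h1]
    have h3 := hos.color_lt
    have h4 := hoe.color_lt
    simp [cellW, tot, hc, show s.color ≠ p by omega, show e.color ≠ p by omega]

/-- The case of a boundary word that is not cyclically reduced. -/
lemma step_notCyc (hRL : IsSC RL) (hφ : ∀ L ∈ RL, φ (FreeGroup.mk L) = 1)
    (IH : ∀ n', n' < (flat S).length + S.length → MainP RL φ v k n')
    (h : Region RL φ v k M len pts h0 S) (hne : ∀ s ∈ S, s.word ≠ []) (hcyc : ¬ CycRed (flat S)) :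
    ∃ F len' pts' L, Tiling φ v M len pts S F len' pts' L ∧
      L.length + 2 ≤ 3 * F + S.length := by
  rcases S with _ | ⟨s, S⟩
  · exact absurd rfl h.ne
  rcases List.eq_nil_or_concat S with rfl | ⟨mid, e, rfl⟩
  · have hfs : flat [s] = s.word := by simp
    rw [hfs] at hcyc
    obtain ⟨y, B, hW, hB, hBc⟩ := fold_single _ s.word le_rfl (hfs ▸ h.red) (hne s (by simp))
    have hy : y ≠ [] := by
      rintro rfl
      apply hcyc
      rw [hW]; simpa [invRev] using hBc
    have hyl := List.length_pos_iff.2 hy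
    have hWl : s.word.length = y.length + (B.length + y.length) := by rw [hW]; simp
    obtain ⟨h1, hw1⟩ := Region.split hRL hφ (X := []) (Y := []) (n := y.length) h (by omega)
    have e1 : (s.take y.length).word = y := by simp [Seg.take, hW]
    have e2 : (s.drop y.length).word = B ++ invRev y := by simp [Seg.drop, hW]
    obtain ⟨h2, hw2⟩ := Region.split hRL hφ (X := [s.take y.length]) (Y := []) (n := B.length) h1
      (by rw [e2]; simp)
    set s1 := s.take y.length
    set s2 := (s.drop y.length).take B.length with hs2
    set s3 := (s.drop y.length).drop B.length with hs3
    have e3 : s2.word = B := by rw [hs2, Seg.take, e2]; simp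
    have e4 : s3.word = invRev y := by rw [hs3, Seg.drop, e2]; simp
    have hfB : flat [s2] = B := by simp [e3]
    have h3 : Region RL φ v k M len pts h0 (s1 :: ([s2] ++ [s3])) := h2
    obtain ⟨F, len', pts', L, T, -, hb⟩ := IH (B.length + 1)
      (by rw [hfs, hWl]; simp; omega) M len pts _ [s2]
      (by rw [hfB]; rfl) (fold_region h3 e1 e4 (hfB ▸ hB))
    obtain ⟨L', T', hL'⟩ := step_fold hRL hφ h3 e1 e4 T
    refine ⟨F, len', pts', L', T'.congr fun Φ hΦ => ?_, ?_⟩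
    · exact (hw2 Φ hΦ).trans (hw1 Φ hΦ)
    · have := hb (hfB ▸ hBc)
      simp at this ⊢; omega
  · rw [List.concat_eq_append] at *
    have hsw := hne s (by simp)
    have hew := hne e (by simp)
    obtain ⟨y, a, d, hA, hD, hopt⟩ := fold_pair s.word e.word
    have hfl : flat (s :: (mid ++ [e])) = y ++ (a ++ flat mid ++ d) ++ invRev y := by
      simp [hA, hD]
    have hcr : (∀ b a' d', a = b :: a' → d ≠ d' ++ [linv b]) → a ≠ [] → d ≠ [] →
        CycRed (a ++ flat mid ++ d) := by
      intro h1 ha hd b w hw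
      obtain ⟨b', a', rfl⟩ := List.exists_cons_of_ne_nil ha
      rcases List.eq_nil_or_concat d with rfl | ⟨d', x, rfl⟩
      · exact hd rfl
      simp only [List.concat_eq_append] at *
      simp only [List.cons_append, List.cons.injEq] at hw
      obtain ⟨rfl, hw⟩ := hw
      rw [← List.append_assoc] at hw
      have := (List.append_inj' hw rfl).2
      simp only [List.cons.injEq, and_true] at this
      exact h1 _ _ d' rfl (by rw [this])
    have hy : y ≠ [] := by
      rintro rfl
      simp only [List.nil_append, invRev, List.map_nil, List.reverse_nil, List.append_nil] at hA hD hfl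
      subst hA
      subst hD
      apply hcyc
      rw [hfl]
      rcases hopt with h1 | h1 | h1
      · exact absurd h1 hsw
      · exact absurd h1 hew
      · exact hcr h1 hsw hew
    have hyl := List.length_pos_iff.2 hy
    obtain ⟨h1, hw1⟩ := Region.split hRL hφ (X := []) (n := y.length) h (by simp [hA])
    have e1 : (s.take y.length).word = y := by simp [Seg.take, hA]
    have e2 : (s.drop y.length).word = a := by simp [Seg.drop, hA]
    set s1 := s.take y.length
    set s2 := s.drop y.length
    obtain ⟨h2, hw2⟩ := Region.split hRL hφ (X := s1 :: s2 :: mid) (Y := []) (n := d.length) h1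
      (by simp [hD])
    have e3 : (e.take d.length).word = d := by simp [Seg.take, hD]
    have e4 : (e.drop d.length).word = invRev y := by simp [Seg.drop, hD]
    set t1 := e.take d.length
    set t2 := e.drop d.length
    have hfB : flat (s2 :: (mid ++ [t1])) = a ++ flat mid ++ d := by simp [e2, e3]
    have h3 : Region RL φ v k M len pts h0 (s1 :: ((s2 :: (mid ++ [t1])) ++ [t2])) := by
      simpa using h2
    have hw3 : ∀ Φ, AddW Φ → segSum Φ (s1 :: ((s2 :: (mid ++ [t1])) ++ [t2])) =
        segSum Φ (s :: (mid ++ [e])) := by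
      intro Φ hΦ
      have := (hw2 Φ hΦ).trans (hw1 Φ hΦ)
      simpa using this
    have hBne : a ++ flat mid ++ d ≠ [] := by
      intro h4
      have hr := h.red
      rw [hfl, h4, List.append_nil] at hr
      rcases List.eq_nil_or_concat y with rfl | ⟨y', x, rfl⟩
      · exact hy rfl
      · rw [List.concat_eq_append, inv_app, inv_single] at hr
        refine not_red_pair y' (invRev y') x ?_
        simpa using hr
    have hR := fold_region h3 e1 e4 (hfB ▸ hBne)
    have hlen : (flat (s :: (mid ++ [e]))).length =
        2 * y.length + (a ++ flat mid ++ d).length := by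
      rw [hfl]; simp; omega
    suffices hsuf : ∃ F len' pts' L, Tiling φ v M len pts (s2 :: (mid ++ [t1])) F len' pts' L ∧
        L.length + 3 ≤ 3 * F + (s :: (mid ++ [e])).length by
      obtain ⟨F, len', pts', L, T, hb⟩ := hsuf
      obtain ⟨L', T', hL'⟩ := step_fold hRL hφ h3 e1 e4 T
      exact ⟨F, len', pts', L', T'.congr hw3, by omega⟩
    by_cases ha : a = []
    · obtain ⟨hR', hw'⟩ := Region.drop_empty (X := []) hR (by rw [e2, ha])
      obtain ⟨F, len', pts', L, T, hb, -⟩ := IH _ (by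
        rw [hlen]
        simp [e3]; omega) M len pts _ (mid ++ [t1]) rfl hR'
      refine ⟨F, len', pts', L, T.congr hw', ?_⟩
      simp at hb ⊢; omega
    by_cases hd : d = []
    · obtain ⟨hR', hw'⟩ := Region.drop_empty (X := s2 :: mid) (Y := []) hR (by rw [e3, hd])
      rw [List.append_nil] at hR' hw'
      obtain ⟨F, len', pts', L, T, hb, -⟩ := IH _ (by
        rw [hlen]
        simp [e2]; omega) M len pts _ (s2 :: mid) rfl hR'
      refine ⟨F, len', pts', L, T.congr hw', ?_⟩
      simp at hb ⊢; omega
    · obtain ⟨F, len', pts', L, T, -, hb⟩ := IH _ (by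
        rw [hlen]
        simp [e2, e3]; omega) M len pts _ (s2 :: (mid ++ [t1])) rfl hR
      refine ⟨F, len', pts', L, T, ?_⟩
      have := hb (hfB ▸ hcr (by
        rcases hopt with h4 | h4 | h4
        · exact absurd h4 ha
        · exact absurd h4 hd
        · exact h4) ha hd)
      simp at this ⊢; omega

/-- The case of a cyclically reduced boundary word. -/
lemma step_cyc (hRL : IsSC RL) (hφ : ∀ L ∈ RL, φ (FreeGroup.mk L) = 1)
    (IH : ∀ k' n', (k' < k ∨ k' = k ∧ n' < (flat S).length + S.length) → MainP RL φ v k' n')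
    (h : Region RL φ v k M len pts h0 S) (hcyc : CycRed (flat S)) :
    ∃ F len' pts' L, Tiling φ v M len pts S F len' pts' L ∧
      L.length + 3 ≤ 3 * F + S.length := by
  obtain ⟨b, Q, hbQ⟩ := List.exists_cons_of_ne_nil h.ne
  have hA : Ar RL k (FreeGroup.mk (flat S)) := (h.area.conj h0⁻¹).of_eq (by group)
  have hk := h.k_pos
  rcases peel hRL k _ hA [] b Q (by simpa using hbQ) with
    ⟨c, hc, j, hj, hAj⟩ | ⟨B, C, i, j, rfl, hi, hj, hij⟩ | ⟨A, B, i, j, hPe, -⟩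
  · obtain ⟨x, c', u, hxu, hx, hc', hA', hr⟩ := face_exists hRL (k := k - 1) _ [b] c Q le_rfl
      (by simpa [hbQ] using h.red) (by simp) hc ((hAj.mono (by omega)).of_eq (by simp [mk_nil]))
    exact step_face hRL hφ (k' := k - 1) (by omega) (fun n' => IH _ n' (.inl (by omega))) h
      (hbQ.trans hxu) hx hc' hA' hr
  · have hC : C ≠ [] := by
      rintro rfl
      exact hcyc b B hbQ
    refine step_bridge hRL hφ IH h (x := b :: (B ++ [linv b])) (u := C) (by simp [hbQ])
      (by simp) hC ((hi.conj (lt b)).of_eq ?_) (hj.of_eq ?_) hij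
    · simp only [mk_app, mk_cons, lt_linv, mk_nil, mk_inv]; group
    · simp [mk_nil]
  · simp at hPe

/-- Regions can be tiled. -/
theorem main_tiling (hRL : IsSC RL) (hφ : ∀ L ∈ RL, φ (FreeGroup.mk L) = 1) (k : ℕ) :
    ∀ n, MainP RL φ v k n := by
  induction k using Nat.strong_induction_on with
  | _ k IHk =>
  intro n
  induction n using Nat.strong_induction_on with
  | _ n IHn =>
  intro M len pts h0 S hn h
  by_cases hne : ∀ s ∈ S, s.word ≠ []
  · by_cases hcyc : CycRed (flat S)
    · obtain ⟨F, len', pts', L, T, hb⟩ := step_cyc hRL hφ (fun k' n' hk => by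
        rcases hk with hk | ⟨rfl, hn'⟩
        · exact IHk k' hk n'
        · exact IHn n' (by omega)) h hcyc
      exact ⟨F, len', pts', L, T, by omega, fun _ => hb⟩
    · obtain ⟨F, len', pts', L, T, hb⟩ :=
        step_notCyc hRL hφ (fun n' hn' => IHn n' (by omega)) h hne hcyc
      exact ⟨F, len', pts', L, T, hb, fun hc => absurd hc hcyc⟩
  · push Not at hne
    obtain ⟨s, hs, hsw⟩ := hne
    obtain ⟨X, Y, rfl⟩ := List.append_of_mem hs
    obtain ⟨hR, hw⟩ := h.drop_empty hsw
    have hf : flat (X ++ s :: Y) = flat (X ++ Y) := by simp [hsw]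
    obtain ⟨F, len', pts', L, T, hb, hb'⟩ := IHn ((flat (X ++ Y)).length + (X ++ Y).length)
      (by rw [← hn, hf]; simp) M len pts h0 _ rfl hR
    refine ⟨F, len', pts', L, T.congr hw, by simp at hb ⊢; omega, fun hc => ?_⟩
    have := hb' (hf ▸ hc)
    simp at this ⊢; omega

end FatBigon

namespace FatBigon
set_option linter.unusedSimpArgs false
open FreeGroup (invRev)
variable {α : Type*} {H : Type*} [Group H]

/-! ### Counting cells around a face -/

/-- The weight that tests whether an interval on the geodesic side contains `j`. -/
def cov (j : ℕ) : ℕ → ℕ → ℕ → ℕ := fun c lo n => if c = 0 ∧ lo ≤ j ∧ j < lo + n then 1 else 0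

lemma cov_addW (j : ℕ) : AddW (cov j) where
  add c lo m n := by
    simp only [cov]
    split_ifs <;> omega
  const c hc lo lo' n := by simp [cov, hc]

/-- The length of a cell, if it lies between the face `f` and the geodesic side. -/
def vLen (f : ℕ) (c : Cell) : ℕ :=
  (if c.a = 0 ∧ c.b = f then c.ℓ else 0) + (if c.b = 0 ∧ c.a = f then c.ℓ else 0)

/-- Whether a cell lies between the face `f` and the geodesic side, and contains `j`. -/
def vCov (f j : ℕ) (c : Cell) : ℕ :=
  (if c.a = 0 ∧ c.b = f ∧ c.la ≤ j ∧ j < c.la + c.ℓ then 1 else 0) +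
    (if c.b = 0 ∧ c.a = f ∧ c.lb ≤ j ∧ j < c.lb + c.ℓ then 1 else 0)

/-- Whether a cell lies between the face `f` and the geodesic side. -/
def vNum (f : ℕ) (c : Cell) : ℕ :=
  (if c.a = 0 ∧ c.b = f then 1 else 0) + (if c.b = 0 ∧ c.a = f then 1 else 0)

/-- The number of sides in the face `f` of a cell that is not between `f` and the
geodesic side. -/
def aNum (f : ℕ) (c : Cell) : ℕ :=
  (if c.a = f ∧ c.b ≠ 0 then 1 else 0) + (if c.b = f ∧ c.a ≠ 0 then 1 else 0)

/-- Whether a cell lies between the face `f` and the outer face `1`. -/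
def oneNum (f : ℕ) (c : Cell) : ℕ :=
  (if c.a = f ∧ c.b = 1 then 1 else 0) + (if c.b = f ∧ c.a = 1 then 1 else 0)

/-- The curvature weight of a cell at the face `f`: every side in `f` counts once, and twice if the
other side is an outer one. -/
def wt (f : ℕ) (c : Cell) : ℕ :=
  (if c.a = f then (if c.b < 2 then 2 else 1) else 0) +
    (if c.b = f then (if c.a < 2 then 2 else 1) else 0)

section
variable {φ : FreeGroup α →* H} {v : ℕ → H} {N m f : ℕ} {len : ℕ → ℕ} {pts : ℕ → Set H}
  {L : List Cell}

lemma map_sum_le {g g' : Cell → ℕ} (h : ∀ c ∈ L, g c ≤ g' c) : (L.map g).sum ≤ (L.map g').sum :=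
  List.sum_le_sum h

lemma le_map_sum {g : Cell → ℕ} {c : Cell} (hc : c ∈ L) : g c ≤ (L.map g).sum :=
  List.single_le_sum (by simp) _ (List.mem_map_of_mem hc)

lemma map_sum_add (g g' : Cell → ℕ) :
    (L.map fun c => g c + g' c).sum = (L.map g).sum + (L.map g').sum := List.sum_map_add

/-- The cells between a face `f` and the geodesic side have total length at most half of the
length of `f`. -/
lemma vLen_le (hf : 2 ≤ f) (hok : ∀ c ∈ L, CellOK v N len pts c)
    (hcov : ∀ j, cellSum (cov j) L ≤ if j < m then 1 else 0)
    (hgeo : ∀ i j l, i ≤ j → j ≤ m → v i * φ (FreeGroup.mk l) = v j → j - i ≤ l.length)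
    (hd : Diam φ (pts f) (len f)) : 2 * (L.map (vLen f)).sum ≤ len f := by
  have hvc : ∀ j c, vCov f j c ≤ cellW (cov j) c := by
    intro j c
    simp only [vCov, cellW, cov]
    split_ifs <;> omega
  -- an interval of a cell stays on the geodesic
  have hend : ∀ c ∈ L, ∀ x n, (∀ j, cov j 0 x n ≤ cellW (cov j) c) → 0 < n → x + n ≤ m := by
    intro c hc x n h hn
    have h1 := h (x + n - 1)
    have h2 := (h1.trans (le_map_sum hc)).trans (hcov (x + n - 1))
    have h3 : cov (x + n - 1) 0 x n = 1 := if_pos (by omega)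
    rw [h3] at h2
    split_ifs at h2 <;> omega
  -- a point covered by a cell of `f` lies between two vertices of `f`
  have hpt : ∀ j, ∀ c ∈ L, vCov f j c ≠ 0 →
      ∃ x y, x ≤ j ∧ j < y ∧ y ≤ m ∧ v x ∈ pts f ∧ v y ∈ pts f := by
    intro j c hc h
    by_cases h1 : c.a = 0 ∧ c.b = f ∧ c.la ≤ j ∧ j < c.la + c.ℓ
    · obtain ⟨ha, hb, h2, h3⟩ := h1
      have := (hok c hc).va ha (by omega)
      rw [hb] at this
      refine ⟨_, _, h2, h3, hend c hc c.la c.ℓ (fun j => ?_) (by omega), this⟩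
      simp [cellW, ha]
    · by_cases h1' : c.b = 0 ∧ c.a = f ∧ c.lb ≤ j ∧ j < c.lb + c.ℓ
      · obtain ⟨hb, ha, h2, h3⟩ := h1'
        have := (hok c hc).vb hb (by omega)
        rw [ha] at this
        refine ⟨_, _, h2, h3, hend c hc c.lb c.ℓ (fun j => ?_) (by omega), this⟩
        simp [cellW, hb]
      · exact absurd (by rw [vCov, if_neg h1, if_neg h1']) h
  have hint : ∀ x n, x + n ≤ m → ∑ j ∈ Finset.range m, (if x ≤ j ∧ j < x + n then 1 else 0) = n := by
    intro x n h
    rw [← Finset.sum_filter, Finset.sum_const, smul_eq_mul, mul_one]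
    have : Finset.filter (fun j => x ≤ j ∧ j < x + n) (Finset.range m) = Finset.Ico x (x + n) := by
      ext j; simp; omega
    rw [this]; simp
  have hsum1 : ∀ c ∈ L, vLen f c = ∑ j ∈ Finset.range m, vCov f j c := by
    intro c hc
    simp only [vLen, vCov, Finset.sum_add_distrib]
    congr 1
    · by_cases h1 : c.a = 0 ∧ c.b = f
      · simp only [h1, true_and, and_self, if_true]
        rcases Nat.eq_zero_or_pos c.ℓ with h0 | h0
        · rw [h0]; symm; apply Finset.sum_eq_zero; intro j _; rw [if_neg (by omega)]
        · exact (hint _ _ (hend c hc c.la c.ℓ (fun j => by simp [cellW, h1]) h0)).symm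
      · rw [if_neg h1]; symm; apply Finset.sum_eq_zero; intro j _; rw [if_neg (by tauto)]
    · by_cases h1 : c.b = 0 ∧ c.a = f
      · simp only [h1, true_and, and_self, if_true]
        rcases Nat.eq_zero_or_pos c.ℓ with h0 | h0
        · rw [h0]; symm; apply Finset.sum_eq_zero; intro j _; rw [if_neg (by omega)]
        · exact (hint _ _ (hend c hc c.lb c.ℓ (fun j => by simp [cellW, h1]) h0)).symm
      · rw [if_neg h1]; symm; apply Finset.sum_eq_zero; intro j _; rw [if_neg (by tauto)]
  have hswap : ∀ L' : List Cell, (L'.map fun c => ∑ j ∈ Finset.range m, vCov f j c).sum =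
      ∑ j ∈ Finset.range m, (L'.map (vCov f j)).sum := by
    intro L'
    induction L' with
    | nil => simp
    | cons c L' ih => simp [ih, Finset.sum_add_distrib]
  set J := (Finset.range m).filter fun j => (L.map (vCov f j)).sum ≠ 0 with hJ
  have hle : (L.map (vLen f)).sum ≤ J.card := by
    rw [List.map_congr_left hsum1, hswap, hJ, Finset.card_filter]
    refine Finset.sum_le_sum fun j _ => ?_
    have h1 : (L.map (vCov f j)).sum ≤ 1 := by
      have := (map_sum_le (L := L) (fun c _ => hvc j c)).trans (hcov j)
      split_ifs at this <;> omega
    split_ifs <;> omega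
  have hJpt : ∀ j ∈ J, ∃ x y, x ≤ j ∧ j < y ∧ y ≤ m ∧ v x ∈ pts f ∧ v y ∈ pts f := by
    intro j hj
    have h1 := (Finset.mem_filter.1 hj).2
    by_contra hcon
    refine h1 (List.sum_eq_zero ?_)
    intro n hn
    obtain ⟨c, hc, rfl⟩ := List.mem_map.1 hn
    by_contra h2
    exact hcon (hpt j c hc h2)
  rcases J.eq_empty_or_nonempty with hJe | hJn
  · rw [hJe, Finset.card_empty] at hle; omega
  have hsub : J ⊆ Finset.Ico (J.min' hJn) (J.min' hJn + len f / 2) := by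
    intro j hj
    have h1 := J.min'_le j hj
    obtain ⟨x, -, hx, -, -, hxp, -⟩ := hJpt _ (J.min'_mem hJn)
    obtain ⟨-, y, -, hy, hym, -, hyp⟩ := hJpt j hj
    obtain ⟨l, hl, hll⟩ := hd _ hxp _ hyp
    have := hgeo x y l (by omega) hym hl
    rw [Finset.mem_Ico]
    omega
  have := Finset.card_le_card hsub
  rw [Nat.card_Ico] at this
  omega

/-- Each inner face has weight at least `6`, and at least `7` if it is adjacent to the outer face
`1`. -/
lemma face_wt (hf : 2 ≤ f) (hok : ∀ c ∈ L, CellOK v N len pts c)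
    (hcov : ∀ j, cellSum (cov j) L ≤ if j < m then 1 else 0)
    (hgeo : ∀ i j l, i ≤ j → j ≤ m → v i * φ (FreeGroup.mk l) = v j → j - i ≤ l.length)
    (htot : cellSum (tot f) L = len f) (hlen : 1 ≤ len f)
    (hd : Diam φ (pts f) (len f)) :
    6 ≤ (L.map (wt f)).sum ∧ ((∃ c ∈ L, oneNum f c ≠ 0) → 7 ≤ (L.map (wt f)).sum) := by
  have hV := vLen_le hf hok hcov hgeo hd
  have h1 : (L.map fun c => 2 * vNum f c + aNum f c + oneNum f c).sum ≤ (L.map (wt f)).sum := by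
    refine map_sum_le fun c _ => ?_
    simp only [vNum, aNum, oneNum, wt]
    split_ifs <;> omega
  have h2 : (L.map fun c => 6 * cellW (tot f) c).sum ≤
      (L.map fun c => 6 * vLen f c + aNum f c * (len f - 1)).sum := by
    refine map_sum_le fun c hc => ?_
    have hs := (hok c hc).small
    simp only [vLen, aNum, cellW, tot]
    by_cases ha : c.a = f <;> by_cases hb : c.b = f
    · have := hs (by omega) (by omega)
      rw [ha] at this
      simp [ha, hb, show f ≠ 0 by omega]
      omega
    · by_cases hb0 : c.b = 0
      · simp [ha, hb, hb0, show f ≠ 0 by omega, show ¬ 0 = f by omega]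
      · have := hs (by omega) (by omega)
        rw [ha] at this
        simp [ha, hb, hb0, show f ≠ 0 by omega]
        omega
    · by_cases ha0 : c.a = 0
      · simp [ha, hb, ha0, show f ≠ 0 by omega, show ¬ 0 = f by omega]
      · have := hs (by omega) (by omega)
        rw [hb] at this
        simp [ha, hb, ha0, show f ≠ 0 by omega]
        omega
    · simp [ha, hb]
  have h3 : (L.map (vNum f)).sum = 0 → (L.map (vLen f)).sum = 0 := by
    intro h
    rw [List.sum_eq_zero_iff] at h ⊢
    intro n hn
    obtain ⟨c, hc, rfl⟩ := List.mem_map.1 hn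
    have := h _ (List.mem_map_of_mem hc)
    simp only [vNum, vLen] at this ⊢
    split_ifs at this ⊢ <;> omega
  rw [map_sum_add, map_sum_add, List.sum_map_mul_left] at h1
  rw [map_sum_add, List.sum_map_mul_left, List.sum_map_mul_left, List.sum_map_mul_right] at h2
  change 6 * cellSum (tot f) L ≤ _ at h2
  rw [htot] at h2
  set A := (L.map (aNum f)).sum
  have h4 : (L.map (vNum f)).sum = 0 → 7 ≤ A := by
    intro h
    rw [h3 h] at h2
    by_contra hA
    have : A * (len f - 1) ≤ 6 * (len f - 1) := Nat.mul_le_mul_right _ (by omega)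
    omega
  have h5 : 4 ≤ A := by
    by_contra hA
    have : A * (len f - 1) ≤ 3 * (len f - 1) := Nat.mul_le_mul_right _ (by omega)
    omega
  refine ⟨by omega, ?_⟩
  rintro ⟨c, hc, hc1⟩
  have := le_map_sum (g := oneNum f) hc
  omega

/-- The total weight of a cell over all inner faces. -/
lemma wt_sum (F : ℕ) {c : Cell} (ha : c.a < 2 + F) (hb : c.b < 2 + F) :
    ∑ i ∈ Finset.range F, wt (i + 2) c = if c.a < 2 ∧ c.b < 2 then 0 else 2 := by
  have key : ∀ x n : ℕ, x < 2 + F →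
      ∑ i ∈ Finset.range F, (if x = i + 2 then n else 0) = if x < 2 then 0 else n := by
    intro x n hx
    split_ifs with h
    · exact Finset.sum_eq_zero fun i _ => if_neg (by omega)
    · rw [Finset.sum_eq_single_of_mem (x - 2) (by simp; omega)]
      · exact if_pos (by omega)
      · intro i _ hi; exact if_neg (by omega)
  simp only [wt, Finset.sum_add_distrib, key _ _ ha, key _ _ hb]
  split_ifs <;> omega

/-- A tiling with few cells has no cell on the outer face `1`. -/
lemma no_one_cell {F : ℕ} (hok : ∀ c ∈ L, CellOK v (2 + F) len pts c)
    (hcov : ∀ j, cellSum (cov j) L ≤ if j < m then 1 else 0)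
    (hgeo : ∀ i j l, i ≤ j → j ≤ m → v i * φ (FreeGroup.mk l) = v j → j - i ≤ l.length)
    (hnew : ∀ p, 2 ≤ p → p < 2 + F →
      cellSum (tot p) L = len p ∧ 1 ≤ len p ∧ Diam φ (pts p) (len p))
    (hL : L.length ≤ 3 * F) : cellSum (tot 1) L = 0 := by
  by_contra hne
  have hex : ∃ c ∈ L, c.a = 1 ∨ c.b = 1 := by
    by_contra hcon
    push Not at hcon
    refine hne (List.sum_eq_zero ?_)
    intro n hn
    obtain ⟨c, hc, rfl⟩ := List.mem_map.1 hn
    simp [cellW, tot, hcon c hc]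
  obtain ⟨c, hc, hc1⟩ := hex
  have hface : ∀ i ∈ Finset.range F, 6 ≤ (L.map (wt (i + 2))).sum ∧
      ((∃ c ∈ L, oneNum (i + 2) c ≠ 0) → 7 ≤ (L.map (wt (i + 2))).sum) := by
    intro i hi
    rw [Finset.mem_range] at hi
    obtain ⟨h1, h2, h3⟩ := hnew (i + 2) (by omega) (by omega)
    exact face_wt (by omega) hok hcov hgeo h1 h2 h3
  have hswap : ∀ L' : List Cell, (L'.map fun c => ∑ i ∈ Finset.range F, wt (i + 2) c).sum =
      ∑ i ∈ Finset.range F, (L'.map (wt (i + 2))).sum := by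
    intro L'
    induction L' with
    | nil => simp
    | cons c L' ih => simp [ih, Finset.sum_add_distrib]
  have hupper : ∀ L' : List Cell, (∀ c ∈ L', c ∈ L) →
      (L'.map fun c => ∑ i ∈ Finset.range F, wt (i + 2) c).sum ≤ 2 * L'.length := by
    intro L' hL'
    induction L' with
    | nil => simp
    | cons c L' ih =>
      have h1 := ih fun c hc => hL' c (by simp [hc])
      have h2 := wt_sum F (hok c (hL' c (by simp))).a_lt (hok c (hL' c (by simp))).b_lt
      simp only [List.map_cons, List.sum_cons, List.length_cons]
      rw [h2]
      split_ifs <;> omega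
  have hlow : 6 * F ≤ ∑ i ∈ Finset.range F, (L.map (wt (i + 2))).sum := by
    have := Finset.card_nsmul_le_sum (Finset.range F) _ 6 fun i hi => (hface i hi).1
    simpa [mul_comm] using this
  have hca := (hok c hc).a_lt
  have hcb := (hok c hc).b_lt
  by_cases hold : c.a < 2 ∧ c.b < 2
  · obtain ⟨X, Y, rfl⟩ := List.append_of_mem hc
    have h1 := hupper X fun d hd => by simp [hd]
    have h2 := hupper Y fun d hd => by simp [hd]
    have h3 := wt_sum F hca hcb
    rw [if_pos hold] at h3
    rw [← hswap] at hlow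
    simp only [List.map_append, List.map_cons, List.sum_append, List.sum_cons, h3] at hlow
    simp at hL
    omega
  · obtain ⟨i, hi, hone⟩ : ∃ i ∈ Finset.range F, oneNum (i + 2) c ≠ 0 := by
      rcases hc1 with h | h
      · refine ⟨c.b - 2, by simp; omega, ?_⟩
        simp [oneNum, h, show c.b - 2 + 2 = c.b by omega]
      · refine ⟨c.a - 2, by simp; omega, ?_⟩
        simp [oneNum, h, show c.a - 2 + 2 = c.a by omega]
    have hlt : ∑ _i ∈ Finset.range F, 6 < ∑ i ∈ Finset.range F, (L.map (wt (i + 2))).sum :=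
      Finset.sum_lt_sum (fun i hi => (hface i hi).1)
        ⟨i, hi, (hface i hi).2 ⟨c, hc, hone⟩⟩
    have h1 := hupper L fun _ h => h
    rw [hswap] at h1
    simp at hlt
    omega

end

end FatBigon

namespace FatBigon
set_option linter.unusedSimpArgs false
open FreeGroup (invRev)
variable {α : Type*} {H : Type*} [Group H]
variable {RL : Set (List (α × Bool))} {φ : FreeGroup α →* H}

/-! ### Geodesics between two points of a relator -/

/-- The word `V` labels a geodesic of the quotient. -/
def Geo (φ : FreeGroup α →* H) (V : List (α × Bool)) : Prop :=
  ∀ p m s l, V = p ++ m ++ s → φ (FreeGroup.mk l) = φ (FreeGroup.mk m) → m.length ≤ l.length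

lemma Geo.red {V : List (α × Bool)} (h : Geo φ V) : FreeGroup.IsReduced V := by
  rw [FreeGroup.isReduced_iff_not_step]
  intro L hL
  obtain @⟨L₁, L₂, x, b⟩ := hL
  have := h L₁ [(x, b), (x, !b)] L₂ [] (by simp) ?_
  · simp at this
  · have : FreeGroup.mk [(x, b), (x, !b)] = lt (x, b) * lt (linv (x, b)) := by
      rw [show [(x, b), (x, !b)] = (x, b) :: [linv (x, b)] from rfl, mk_cons]; rfl
    rw [this, lt_linv]; simp [mk_nil]

/-- A geodesic `V` that closes up an initial part `u` of a relator `u z`, in such a way that the area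
on this side is minimal and at most the area on the other side, is `u⁻¹`. -/
lemma geo_core (hRL : IsSC RL) (hφ : ∀ L ∈ RL, φ (FreeGroup.mk L) = 1)
    {u z V : List (α × Bool)} (hr : u ++ z ∈ RL) (hV : Geo φ V) {k : ℕ}
    (hA : Ar RL k (FreeGroup.mk (u ++ V))) (hmin : ∀ j < k, ¬ Ar RL j (FreeGroup.mk (u ++ V)))
    (hmin' : ∀ j < k, ¬ Ar RL j (FreeGroup.mk (invRev z ++ V))) : V = invRev u := by
  obtain ⟨y, a, d, rfl, rfl, hopt⟩ := fold_pair V u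
  have hda : FreeGroup.mk (d ++ a) = FreeGroup.mk (d ++ invRev y ++ (y ++ a)) := by
    simp only [mk_app, mk_inv]; group
  by_contra hne
  have hrd : FreeGroup.IsReduced d :=
    red_left (b := invRev y ++ z) (by simpa using hRL.red _ hr)
  have hra : FreeGroup.IsReduced a := red_right hV.red
  have hred : FreeGroup.IsReduced (d ++ a) := by
    rcases hopt with rfl | rfl | h
    · simpa using hrd
    · simpa using hra
    · refine red_join hrd hra fun a' b u' h1 h2 => h b u' a' h2 h1
  have hda0 : d ≠ [] := by
    rintro rfl
    have h1 := mk_map_one hφ hA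
    rw [← hda, List.nil_append] at h1
    have := hV y a [] [] (by simp) (by rw [h1, mk_nil, map_one])
    have : a = [] := List.length_eq_zero_iff.1 (by simpa using this)
    subst this
    apply hne
    simp [inv_inv]
  -- the two sides of the boundary
  set m := a.length with hm
  let v : ℕ → H := fun j => φ (FreeGroup.mk d) * φ (FreeGroup.mk (a.take (m - j)))
  let s1 : Seg α := ⟨1, d, d ++ invRev y ++ z, 0, 1⟩
  let s2 : Seg α := ⟨0, a, [], m, FreeGroup.mk d⟩
  let pts : ℕ → Set H :=
    fun _ => {x | ∃ a, a <+: d ++ invRev y ++ z ∧ x = φ (FreeGroup.mk a)}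
  have hfl : flat [s1, s2] = d ++ a := by simp [s1, s2]
  have hg : 1 * FreeGroup.mk (flat [s1, s2]) * 1⁻¹ = FreeGroup.mk (d ++ invRev y ++ (y ++ a)) := by
    rw [hfl, hda]; group
  have hR : Region RL φ v k 2 (fun _ => (d ++ invRev y ++ z).length) pts 1 [s1, s2] := by
    refine ⟨⟨rfl, ?_, trivial⟩, hfl ▸ hred, ?_, hg ▸ hA, hg ▸ hmin, hg ▸ ⟨?_, ?_⟩⟩
    · simp [s1, s2]
    · rw [hfl]; simp [hda0]
    · intro s hs
      simp only [List.mem_cons, List.not_mem_nil, or_false] at hs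
      rcases hs with rfl | rfl
      · refine ⟨one_lt_two, fun _ => hr, fun _ => ⟨invRev y ++ z, by simp [s1]⟩, fun _ => rfl,
          fun _ b hb => ⟨b, hb, by simp [s1]⟩, fun _ j hj hAj => ?_, fun h => by simp [s1] at h,
          fun h => by simp [s1] at h⟩
        refine hmin' j hj (hAj.of_eq ?_)
        simp only [Seg.loop, s1, mk_app, mk_inv]; group
      · refine ⟨zero_lt_two, fun h => absurd rfl h, fun h => absurd rfl h, fun h => absurd rfl h,
          fun h => absurd rfl h, fun h => absurd rfl h, fun _ => le_rfl, fun _ b hb => ?_⟩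
        change φ (FreeGroup.mk d * FreeGroup.mk b) =
          φ (FreeGroup.mk d) * φ (FreeGroup.mk (a.take (m - (m - b.length))))
        have hbl := hb.length_le
        change b.length ≤ a.length at hbl
        rw [show m - (m - b.length) = b.length by omega, map_mul]
        congr 3
        exact List.prefix_iff_eq_take.1 hb
    · simp only [List.pairwise_cons, List.mem_cons, List.not_mem_nil, or_false, forall_eq,
        List.Pairwise.nil, and_true, IsEmpty.forall_iff, implies_true]
      intro _ h; exact absurd rfl h
  obtain ⟨F, len', pts', L, T, hb, -⟩ := main_tiling hRL hφ k _ 2 _ pts 1 _ rfl hR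
  have hgeo : ∀ i j l, i ≤ j → j ≤ m → v i * φ (FreeGroup.mk l) = v j → j - i ≤ l.length := by
    intro i j l hij hj h
    obtain ⟨w, hw, hwl⟩ : ∃ w, a.take (m - i) = a.take (m - j) ++ w ∧ w.length = j - i := by
      refine ⟨(a.take (m - i)).drop (m - j), ?_, by simp; omega⟩
      have := List.take_append_drop (m - j) (a.take (m - i))
      rw [List.take_take, min_eq_left (by omega)] at this
      exact this.symm
    simp only [v, hw, mk_app, map_mul] at h
    have h2 : φ (FreeGroup.mk (invRev l)) = φ (FreeGroup.mk w) := by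
      rw [mk_inv, map_inv, inv_eq_iff_mul_eq_one]
      have h3 : φ (FreeGroup.mk w) * φ (FreeGroup.mk l) = 1 := by
        rw [mul_assoc, mul_right_inj, mul_assoc] at h
        exact mul_eq_left.1 h
      exact mul_eq_one_comm.1 h3
    have h3 := hV (y ++ a.take (m - j)) w (a.drop (m - i)) (invRev l) (by
      rw [List.append_assoc, List.append_assoc, ← List.append_assoc _ w, ← hw,
        List.take_append_drop]) h2
    rw [FreeGroup.invRev_length] at h3
    omega
  have hcov : ∀ j, cellSum (cov j) L ≤ if j < m then 1 else 0 := by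
    intro j
    rw [T.old _ (cov_addW j) (fun p hp lo n => by simp [cov, show p ≠ 0 by omega])]
    simp [segSum, segW, s1, s2, cov, ← hm]
  have h1 := no_one_cell T.cells_ok hcov hgeo T.new (by simp at hb; omega)
  rw [T.old _ (tot_addW 1) (fun p hp lo n => by simp [tot, show p ≠ 1 by omega])] at h1
  simp [segSum, segW, s1, s2, tot] at h1
  exact hda0 h1

/-- A geodesic between two points of a relator is one of the two arcs of the relator. -/
theorem geo_arc (hRL : IsSC RL) (hφ : ∀ L ∈ RL, φ (FreeGroup.mk L) = 1)
    (hker : ∀ g, φ g = 1 → ∃ k, Ar RL k g) {u z V : List (α × Bool)} (hr : u ++ z ∈ RL)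
    (hV : Geo φ V) (h : φ (FreeGroup.mk (u ++ V)) = 1) : V = invRev u ∨ V = z := by
  classical
  have h1 := hφ _ hr
  have h' : φ (FreeGroup.mk (invRev z ++ V)) = 1 := by
    rw [mk_app, map_mul] at h h1 ⊢
    rw [mk_inv, map_inv, ← eq_inv_of_mul_eq_one_left h1, h]
  have hk := hker _ h
  have hk' := hker _ h'
  rcases le_total (Nat.find hk) (Nat.find hk') with hle | hle
  · exact .inl (geo_core hRL hφ hr hV (Nat.find_spec hk) (fun j hj => Nat.find_min hk hj)
      fun j hj => Nat.find_min hk' (hj.trans_le hle))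
  · right
    have hr' : invRev z ++ invRev u ∈ RL := by
      rw [← inv_app]; exact hRL.inv _ hr
    rw [← inv_inv z]
    refine geo_core hRL hφ hr' hV (Nat.find_spec hk') (fun j hj => Nat.find_min hk' hj)
      fun j hj => ?_
    rw [inv_inv]
    exact Nat.find_min hk (hj.trans_le hle)

/-- Every element is represented by a geodesic word. -/
lemma exists_geo (φ : FreeGroup α →* H) (l : List (α × Bool)) :
    ∃ V, Geo φ V ∧ φ (FreeGroup.mk V) = φ (FreeGroup.mk l) ∧ V.length ≤ l.length := by
  classical
  have hex : ∃ n, ∃ V : List (α × Bool), V.length = n ∧ φ (FreeGroup.mk V) = φ (FreeGroup.mk l) :=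
    ⟨_, l, rfl, rfl⟩
  obtain ⟨V, hVl, hV⟩ := Nat.find_spec hex
  refine ⟨V, ?_, hV, hVl.trans_le (Nat.find_min' hex ⟨l, rfl, rfl⟩)⟩
  rintro p m s t rfl h
  have := Nat.find_min' hex ⟨p ++ t ++ s, rfl, by
    rw [← hV]; simp only [mk_app, map_mul, h]⟩
  rw [← hVl] at this
  simp only [List.length_append] at this
  omega

/-- Relators are isometrically embedded. -/
theorem rel_isometry (hRL : IsSC RL) (hφ : ∀ L ∈ RL, φ (FreeGroup.mk L) = 1)
    (hker : ∀ g, φ g = 1 → ∃ k, Ar RL k g) {a m b l : List (α × Bool)} (hr : a ++ m ++ b ∈ RL)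
    (h : φ (FreeGroup.mk l) = φ (FreeGroup.mk m)) :
    m.length ≤ l.length ∨ a.length + b.length ≤ l.length := by
  obtain ⟨V, hV, h1, h2⟩ := exists_geo φ (invRev l)
  rw [FreeGroup.invRev_length] at h2
  have hr' : m ++ (b ++ a) ∈ RL := by
    have := hRL.rot a (m ++ b) (by simpa using hr)
    simpa using this
  rcases geo_arc hRL hφ hker hr' hV (by
    rw [mk_app, map_mul, h1, mk_inv, map_inv, h, mul_inv_cancel]) with rfl | rfl
  · left; simpa using h2
  · right; simp at h2; omega

end FatBigon

namespace FatBigon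
set_option linter.unusedSimpArgs false
open FreeGroup (invRev)

/-! ### Presentations satisfying `C'(1/6)` -/

section
variable {α : Type*} [DecidableEq α] {R : Set (FreeGroup α)}

/-- The reduced words of the elements of the symmetrization of `R`. -/
def relWords (R : Set (FreeGroup α)) : Set (List (α × Bool)) :=
  {L | ∃ r ∈ R, L ~r r.toWord ∨ L ~r invRev r.toWord}

lemma toWord_mem {r : FreeGroup α} (h : r ∈ R) : r.toWord ∈ relWords R :=
  ⟨r, h, .inl (List.IsRotated.refl _)⟩

lemma wordLength_mk {L : List (α × Bool)} (h : FreeGroup.IsReduced L) :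
    wordLength (FreeGroup.mk L) = L.length := by
  rw [wordLength, FreeGroup.toWord_mk, h.reduce_eq]

lemma isRotated_split {β : Type*} {L w : List β} (h : L ~r w) : ∃ a b, w = a ++ b ∧ L = b ++ a := by
  obtain ⟨n, rfl⟩ := h.symm
  exact ⟨_, _, (List.take_append_drop (n % w.length) w).symm, List.rotate_eq_drop_append_take_mod⟩

lemma rot_red {a b : List (α × Bool)} (h : FreeGroup.IsReduced (a ++ b))
    (hc : ∀ x l, a ++ b ≠ x :: (l ++ [linv x])) : FreeGroup.IsReduced (b ++ a) := by
  refine red_join (red_right h) (red_left h) fun b' x a' h1 h2 => ?_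
  exact hc x (a' ++ b') (by rw [h1, h2]; simp)

lemma cyc_inv {w : List (α × Bool)} (hc : ∀ x l, w ≠ x :: (l ++ [linv x])) (x) (l) :
    invRev w ≠ x :: (l ++ [linv x]) := by
  intro h
  have := congrArg invRev h
  rw [inv_inv, inv_cons, inv_app, inv_single, linv_linv] at this
  exact hc _ _ this

lemma mem_symmetrize (hred : ∀ r ∈ R, IsCyclicallyReduced r) {L : List (α × Bool)}
    (h : L ∈ relWords R) : FreeGroup.IsReduced L ∧ FreeGroup.mk L ∈ symmetrize R := by
  obtain ⟨r, hr, h⟩ := h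
  have key : ∀ w : List (α × Bool), FreeGroup.IsReduced w → (∀ x l, w ≠ x :: (l ++ [linv x])) →
      L ~r w → FreeGroup.IsReduced L ∧ IsCyclicConj (FreeGroup.mk L) (FreeGroup.mk w) := by
    intro w hw hc hL
    obtain ⟨a, b, rfl, rfl⟩ := isRotated_split hL
    refine ⟨rot_red hw hc, FreeGroup.mk a, FreeGroup.mk b, mk_app _ _, mk_app _ _, ?_⟩
    rw [wordLength_mk (red_left hw), wordLength_mk (red_right hw), wordLength_mk hw,
      List.length_append]
  rcases h with h | h
  · obtain ⟨h1, h2⟩ := key _ FreeGroup.isReduced_toWord (hred r hr) h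
    rw [FreeGroup.mk_toWord] at h2
    exact ⟨h1, r, hr, .inl h2⟩
  · obtain ⟨h1, h2⟩ := key _ (red_inv FreeGroup.isReduced_toWord) (cyc_inv (hred r hr)) h
    rw [mk_inv, FreeGroup.mk_toWord] at h2
    exact ⟨h1, r, hr, .inr h2⟩

lemma isWordPrefix_mk {p L : List (α × Bool)} (hL : FreeGroup.IsReduced L) (h : p <+: L) :
    IsWordPrefix (FreeGroup.mk p) (FreeGroup.mk L) := by
  obtain ⟨t, rfl⟩ := h
  rw [IsWordPrefix, mk_app, inv_mul_cancel_left, ← mk_app, wordLength_mk hL,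
    wordLength_mk (red_left hL), wordLength_mk (red_right hL), List.length_append]

/-- The trivial element and a nontrivial relator cannot both be relators of a `C'(1/6)`
presentation, because the empty word would be a piece of the trivial relator. -/
lemma one_notMem (hsc : SmallCancellationSixth R) {r : FreeGroup α} (hr : r ∈ R) (h1 : r ≠ 1) :
    (1 : FreeGroup α) ∉ R := by
  intro h
  have hs : ∀ x ∈ R, x ∈ symmetrize R := fun x hx =>
    ⟨x, hx, .inl ⟨x, 1, by simp, by simp, by simp [wordLength]⟩⟩
  have hp : ∀ x : FreeGroup α, IsWordPrefix 1 x := fun x => by simp [IsWordPrefix, wordLength]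
  have := hsc 1 ⟨r, hs r hr, 1, hs 1 h, h1, hp _, hp _⟩ 1 (hs 1 h) (hp _)
  simp [wordLength] at this

lemma inv_mem {L : List (α × Bool)} (h : L ∈ relWords R) : invRev L ∈ relWords R := by
  obtain ⟨r, hr, h⟩ := h
  refine ⟨r, hr, h.symm.imp (fun h => ?_) rotated_inv⟩
  simpa [inv_inv] using rotated_inv h

/-- The symmetrized relators satisfy the assumptions of the previous parts. -/
lemma isSC (hred : ∀ r ∈ R, IsCyclicallyReduced r) (hsc : SmallCancellationSixth R)
    (h1 : (1 : FreeGroup α) ∉ R) : IsSC (relWords R) where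
  rot a b := by
    rintro ⟨r, hr, h⟩
    exact ⟨r, hr, h.imp (rotated_app b a).trans (rotated_app b a).trans⟩
  inv _ := inv_mem
  red L h := (mem_symmetrize hred h).1
  ne := by
    rintro ⟨r, hr, h⟩
    have : r.toWord = [] := by
      rcases h with h | h
      · exact List.isRotated_nil_iff'.1 h |>.symm
      · have := List.isRotated_nil_iff'.1 h
        simpa [inv_inv] using (congrArg invRev this).symm
    exact h1 (FreeGroup.toWord_eq_nil_iff.1 this ▸ hr)
  sc L₁ h₁ L₂ h₂ hne p hp₁ hp₂ := by
    obtain ⟨r₁, s₁⟩ := mem_symmetrize hred h₁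
    obtain ⟨r₂, s₂⟩ := mem_symmetrize hred h₂
    have hp : FreeGroup.IsReduced p := r₁.infix hp₁.isInfix
    have := hsc (FreeGroup.mk p) ⟨_, s₁, _, s₂, fun h => hne ?_, isWordPrefix_mk r₁ hp₁,
      isWordPrefix_mk r₂ hp₂⟩ _ s₁ (isWordPrefix_mk r₁ hp₁)
    · rwa [wordLength_mk r₁, wordLength_mk hp] at this
    · have := congrArg FreeGroup.toWord h
      rwa [FreeGroup.toWord_mk, FreeGroup.toWord_mk, r₁.reduce_eq, r₂.reduce_eq] at this

lemma map_rel {L : List (α × Bool)} (h : L ∈ relWords R) :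
    PresentedGroup.mk R (FreeGroup.mk L) = 1 := by
  obtain ⟨r, hr, h⟩ := h
  have h0 : PresentedGroup.mk R r = 1 := PresentedGroup.one_of_mem hr
  have key : ∀ w, PresentedGroup.mk R (FreeGroup.mk w) = 1 → L ~r w →
      PresentedGroup.mk R (FreeGroup.mk L) = 1 := by
    intro w hw hL
    obtain ⟨a, b, rfl, rfl⟩ := isRotated_split hL
    rw [mk_app, map_mul] at hw ⊢
    exact mul_eq_one_comm.1 hw
  rcases h with h | h
  · exact key _ (by rw [FreeGroup.mk_toWord, h0]) h
  · exact key _ (by rw [mk_inv, FreeGroup.mk_toWord, map_inv, h0, inv_one]) h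

lemma area_inv {k : ℕ} {x : FreeGroup α} (h : Ar (relWords R) k x) : Ar (relWords R) k x⁻¹ := by
  induction h with
  | one k => rw [inv_one]; exact .one k
  | mul g hL _ ih =>
    refine (ih.prod (Ar.relConj (inv_mem hL) g)).of_eq ?_
    rw [mk_inv]; group

/-- Every element of the normal closure of the relators has finite area. -/
lemma exists_area {g : FreeGroup α} (h : PresentedGroup.mk R g = 1) :
    ∃ k, Ar (relWords R) k g := by
  rw [PresentedGroup.mk_eq_one_iff] at h
  refine Subgroup.closure_induction (p := fun g _ => ∃ k, Ar (relWords R) k g) ?_ ⟨0, .one 0⟩ ?_ ?_ h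
  · intro x hx
    obtain ⟨r, hr, hx⟩ := Group.mem_conjugatesOfSet_iff.1 hx
    obtain ⟨c, rfl⟩ := isConj_iff.1 hx
    refine ⟨1, ?_⟩
    have := Ar.relConj (toWord_mem hr) c
    rwa [FreeGroup.mk_toWord] at this
  · rintro x y - - ⟨i, hi⟩ ⟨j, hj⟩
    exact ⟨_, hi.prod hj⟩
  · rintro x - ⟨k, hk⟩
    exact ⟨k, area_inv hk⟩

end

/-! ### Words and paths in the Cayley graph -/

section
variable {α : Type*} {R : Set (FreeGroup α)}

/-- The Cayley graph of the presented group. -/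
abbrev cay (R : Set (FreeGroup α)) : SimpleGraph (PresentedGroup R) :=
  cayleyGraph (PresentedGroup R) (Set.range (PresentedGroup.of : α → PresentedGroup R))

lemma adj_lt {x : PresentedGroup R} (b : α × Bool) (h : x ≠ x * PresentedGroup.mk R (lt b)) :
    (cay R).Adj x (x * PresentedGroup.mk R (lt b)) := by
  refine (SimpleGraph.fromRel_adj _ _ _).2 ⟨h, ?_⟩
  obtain ⟨a, _ | _⟩ := b
  · right
    refine ⟨a, ?_⟩
    have : lt (a, false) = (FreeGroup.of a)⁻¹ := rfl
    rw [this, map_inv]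
    simp [PresentedGroup.of]
  · left
    refine ⟨a, ?_⟩
    have : lt (a, true) = FreeGroup.of a := rfl
    rw [this]
    simp [PresentedGroup.of]

lemma exists_lt {x y : PresentedGroup R} (h : (cay R).Adj x y) :
    ∃ b, x * PresentedGroup.mk R (lt b) = y := by
  obtain ⟨-, ⟨a, ha⟩ | ⟨a, ha⟩⟩ := (SimpleGraph.fromRel_adj _ _ _).1 h
  · refine ⟨(a, true), ?_⟩
    change x * PresentedGroup.of a = y
    rw [ha]; group
  · refine ⟨(a, false), ?_⟩
    have : lt (a, false) = (FreeGroup.of a)⁻¹ := rfl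
    rw [this, map_inv]
    change x * (PresentedGroup.of a)⁻¹ = y
    rw [ha]; group

/-- Letters that are trivial in the group give no edge of the Cayley graph, so that the walk may be
shorter than the word. -/
lemma walk_of_word (l : List (α × Bool)) : ∀ x y : PresentedGroup R,
    x * PresentedGroup.mk R (FreeGroup.mk l) = y →
    ∃ w : (cay R).Walk x y, w.length ≤ l.length ∧
      ∀ u ∈ w.support, ∃ a, a <+: l ∧ u = x * PresentedGroup.mk R (FreeGroup.mk a) := by
  induction l with
  | nil =>
    rintro x y rfl
    rw [mk_nil, map_one, mul_one]
    refine ⟨.nil, by simp, fun u hu => ⟨[], by simp, ?_⟩⟩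
    rw [mk_nil, map_one, mul_one]
    simpa using hu
  | cons b l ih =>
    rintro x y h
    rw [mk_cons, map_mul, ← mul_assoc] at h
    obtain ⟨w, hw, hs⟩ := ih _ _ h
    have hs' : ∀ u ∈ w.support, ∃ a, a <+: b :: l ∧
        u = x * PresentedGroup.mk R (FreeGroup.mk a) := by
      intro u hu
      obtain ⟨a, ha, rfl⟩ := hs u hu
      exact ⟨b :: a, by simpa using ha, by rw [mk_cons, map_mul, mul_assoc]⟩
    by_cases hx : x = x * PresentedGroup.mk R (lt b)
    · refine ⟨w.copy hx.symm rfl, by simp; omega, by simpa using hs'⟩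
    · refine ⟨.cons (adj_lt b hx) w, by simpa using hw, ?_⟩
      intro u hu
      rw [SimpleGraph.Walk.support_cons, List.mem_cons] at hu
      rcases hu with rfl | hu
      · exact ⟨[], by simp, by simp [mk_nil]⟩
      · exact hs' u hu

lemma word_of_walk {x y : PresentedGroup R} (w : (cay R).Walk x y) :
    ∃ l, x * PresentedGroup.mk R (FreeGroup.mk l) = y ∧ l.length = w.length := by
  induction w with
  | nil => exact ⟨[], by simp [mk_nil], rfl⟩
  | cons h w ih =>
    obtain ⟨b, rfl⟩ := exists_lt h
    obtain ⟨l, hl, hlen⟩ := ih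
    exact ⟨b :: l, by rw [mk_cons, map_mul, ← mul_assoc, hl], by simp [hlen]⟩

lemma dist_le_word {x y : PresentedGroup R} {l : List (α × Bool)}
    (h : x * PresentedGroup.mk R (FreeGroup.mk l) = y) : (cay R).dist x y ≤ l.length := by
  obtain ⟨w, hw, -⟩ := walk_of_word l x y h
  exact (SimpleGraph.dist_le w).trans hw

lemma word_of_dist (x y : PresentedGroup R) :
    ∃ l, x * PresentedGroup.mk R (FreeGroup.mk l) = y ∧ l.length = (cay R).dist x y := by
  obtain ⟨g, hg⟩ := PresentedGroup.mk_surjective R (x⁻¹ * y)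
  obtain ⟨l, rfl⟩ := Quot.exists_rep g
  have hg' : x * PresentedGroup.mk R (FreeGroup.mk l) = y := by
    change PresentedGroup.mk R (FreeGroup.mk l) = _ at hg
    rw [hg]; group
  obtain ⟨w, -⟩ := walk_of_word l x y hg'
  obtain ⟨w', hw'⟩ := SimpleGraph.Reachable.exists_walk_length_eq_dist ⟨w⟩
  obtain ⟨l', h, h'⟩ := word_of_walk w'
  exact ⟨l', h, h'.trans hw'⟩

lemma ball_finite [Finite α] (n : ℕ) : (gBall (cay R) 1 n).Finite := by
  refine ((List.finite_length_le (α × Bool) n).image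
    fun l => PresentedGroup.mk R (FreeGroup.mk l)).subset ?_
  intro y hy
  obtain ⟨l, hl, hlen⟩ := word_of_dist 1 y
  refine ⟨l, hlen.trans_le hy, by simpa using hl⟩

end

/-! ### The two halves of a relator -/

section
variable {α : Type*} [DecidableEq α] {R : Set (FreeGroup α)}

/-- The first half of a relator. -/
def half (r : FreeGroup α) : List (α × Bool) := r.toWord.take (r.toWord.length / 2)

/-- The second half of a relator. -/
def rest (r : FreeGroup α) : List (α × Bool) := r.toWord.drop (r.toWord.length / 2)

/-- The vertex opposite to the basepoint on the loop labelled by a relator. -/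
def antipode (R : Set (FreeGroup α)) (r : FreeGroup α) : PresentedGroup R :=
  PresentedGroup.mk R (FreeGroup.mk (half r))

lemma half_app_rest (r : FreeGroup α) : half r ++ rest r = r.toWord := List.take_append_drop _ _

lemma half_length (r : FreeGroup α) : (half r).length = wordLength r / 2 := by
  simp [half, wordLength]; omega

lemma rest_length (r : FreeGroup α) : (rest r).length = wordLength r - wordLength r / 2 := by
  simp [rest, wordLength]

lemma antipode_rest {r : FreeGroup α} (hr : r ∈ R) :
    PresentedGroup.mk R (FreeGroup.mk (invRev (rest r))) = antipode R r := by
  have h := map_rel (toWord_mem hr)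
  rw [← half_app_rest, mk_app, map_mul] at h
  rw [mk_inv, map_inv, antipode]
  exact (eq_inv_of_mul_eq_one_left h).symm

/-- The other half of the relator is not shorter, so this is `rel_isometry` for the first half. -/
lemma dist_antipode (hSC : IsSC (relWords R)) {r : FreeGroup α} (hr : r ∈ R) :
    (cay R).dist 1 (antipode R r) = wordLength r / 2 := by
  refine le_antisymm ((dist_le_word (one_mul _)).trans_eq (half_length r)) ?_
  obtain ⟨l, hl, hlen⟩ := word_of_dist 1 (antipode R r)
  rw [one_mul] at hl
  have := rel_isometry hSC (fun _ => map_rel) (fun _ => exists_area) (a := []) (m := half r)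
    (b := rest r) (by simpa [half_app_rest] using toWord_mem hr) hl
  rw [half_length, rest_length] at this
  simp at this
  omega

/-- The two halves of a relator form a bigon. Outside the `s`-neighbourhood of the endpoints, a point
of one half and a point of the other half cut the relator into two arcs that are longer than `s`. -/
lemma isBigonAt_antipode (hSC : IsSC (relWords R)) {r : FreeGroup α} (hr : r ∈ R)
    (h2 : 2 ≤ wordLength r) (s : ℝ) : IsBigonAt (cay R) 1 2 s s (antipode R r) := by
  obtain ⟨w₁, hw₁, hs₁⟩ := walk_of_word (half r) 1 (antipode R r) (one_mul _)
  obtain ⟨w₂, hw₂, hs₂⟩ := walk_of_word (invRev (rest r)) 1 (antipode R r)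
    (by rw [one_mul, antipode_rest hr])
  rw [FreeGroup.invRev_length, rest_length] at hw₂
  rw [half_length] at hw₁
  refine ⟨w₁, w₂, ?_, ?_, ?_⟩
  · rw [dist_antipode hSC hr]; exact_mod_cast (by omega : w₁.length ≤ 2 * (wordLength r / 2))
  · rw [dist_antipode hSC hr]; exact_mod_cast (by omega : w₂.length ≤ 2 * (wordLength r / 2))
  · rintro u hu v hv ⟨hu1, hu2⟩ -
    obtain ⟨a, ⟨m, ha⟩, rfl⟩ := hs₁ u hu
    obtain ⟨a', ⟨t, ha'⟩, rfl⟩ := hs₂ v hv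
    rw [one_mul] at hu1 hu2 ⊢
    rw [one_mul]
    obtain ⟨l, hl, hlen⟩ := word_of_dist (PresentedGroup.mk R (FreeGroup.mk a))
      (PresentedGroup.mk R (FreeGroup.mk a'))
    have hrel : [] ++ (invRev a' ++ a) ++ (m ++ invRev t) ∈ relWords R := by
      have h := toWord_mem hr
      rw [← half_app_rest, ← ha, ← inv_inv (rest r), ← ha', inv_app] at h
      have := hSC.rot (a ++ m ++ invRev t) (invRev a') (by simpa using h)
      simpa using this
    have hd1 : (cay R).dist 1 (PresentedGroup.mk R (FreeGroup.mk a)) ≤ a.length :=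
      dist_le_word (one_mul _)
    have hd2 : (cay R).dist (antipode R r) (PresentedGroup.mk R (FreeGroup.mk a)) ≤ m.length := by
      rw [← FreeGroup.invRev_length]
      refine dist_le_word ?_
      rw [antipode, ← ha, mk_app, mk_inv, map_mul, map_inv, mul_inv_cancel_right]
    have := rel_isometry hSC (fun _ => map_rel) (fun _ => exists_area) hrel (l := invRev l) (by
      rw [mk_app, mk_inv, mk_inv, map_mul, map_inv, map_inv, ← hl]; group)
    simp only [FreeGroup.invRev_length, List.length_append, List.length_nil, hlen] at this
    rcases this with h | h
    · refine hu1.trans_le ?_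
      exact_mod_cast (by omega)
    · refine hu2.trans_le ?_
      exact_mod_cast (by omega)

/-- Distinct relators have distinct antipodes: a geodesic to a common antipode would be a piece that
is half of a relator. -/
lemma antipode_inj (hSC : IsSC (relWords R))
    (hdistinct : ∀ r₁ ∈ R, ∀ r₂ ∈ R, r₁ ≠ r₂ → ¬ (IsCyclicConj r₁ r₂ ∨ IsCyclicConj r₁ r₂⁻¹))
    {r r' : FreeGroup α} (hr : r ∈ R) (hr' : r' ∈ R) (h2 : 2 ≤ wordLength r')
    (h : antipode R r = antipode R r') : r = r' := by
  have hG : Geo (PresentedGroup.mk R) (invRev (half r')) := by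
    intro p m s l hV hl
    have hrel : (invRev (rest r') ++ p) ++ m ++ s ∈ relWords R := by
      have := hSC.inv _ (toWord_mem hr')
      rw [← half_app_rest, inv_app, hV] at this
      simpa using this
    have h1 := rel_isometry hSC (fun _ => map_rel) (fun _ => exists_area) hrel hl
    have h3 := congrArg List.length hV
    have h4 := half_length r'
    have h5 := rest_length r'
    simp only [List.length_append, FreeGroup.invRev_length] at h1 h3
    omega
  have hrel := toWord_mem hr
  rw [← half_app_rest] at hrel
  have hpre : half r' <+: r'.toWord := ⟨_, half_app_rest r'⟩
  have key : ∀ L ∈ relWords R, half r' <+: L → L = r'.toWord := by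
    intro L hL hp
    by_contra hne
    have := hSC.sc _ (toWord_mem hr') L hL (Ne.symm hne) _ hpre hp
    rw [half_length] at this
    change _ < wordLength r' at this
    omega
  rcases geo_arc hSC (fun _ => map_rel) (fun _ => exists_area) hrel hG (by
    rw [mk_app, mk_inv, map_mul, map_inv]
    exact mul_inv_eq_one.2 h) with h1 | h1
  · have h1 := congrArg invRev h1
    rw [inv_inv, inv_inv] at h1
    exact FreeGroup.toWord_injective (key _ (toWord_mem hr) (h1 ▸ ⟨_, half_app_rest r⟩))
  · by_contra hne
    have h3 := key _ (hSC.inv _ (toWord_mem hr)) ⟨invRev (half r), by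
      rw [← half_app_rest r, inv_app, ← h1, inv_inv]⟩
    rw [← FreeGroup.toWord_inv] at h3
    have h4 := FreeGroup.toWord_injective h3
    exact hdistinct r' hr' r hr (Ne.symm hne)
      (.inr ⟨r⁻¹, 1, by simp, by simp [h4], by simp [wordLength]⟩)

end
end FatBigon

/-- (Proposition 3.7.) Let `G = ⟨S ∣ R⟩` be a `C'(1/6)` small cancellation
presentation over a finite alphabet, with all relators cyclically reduced and no relator a
cyclic conjugate of another relator or of its inverse. If for some `d > 1`, `C ≥ 0` and an
infinite set `I ⊆ ℕ` the number of relators with length in `[n − C, n]` exceeds `dⁿ` for all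
`n ∈ I`, then the Cayley graph of `G` has exponentially many fat bigons. -/
theorem smallCancellation_hasExpManyFatBigons
    {α : Type*} [Fintype α] [DecidableEq α] (R : Set (FreeGroup α))
    (hred : ∀ r ∈ R, IsCyclicallyReduced r)
    (hdistinct : ∀ r₁ ∈ R, ∀ r₂ ∈ R, r₁ ≠ r₂ →
      ¬ (IsCyclicConj r₁ r₂ ∨ IsCyclicConj r₁ r₂⁻¹))
    (hsc : SmallCancellationSixth R)
    (d : ℝ) (hd : 1 < d) (C : ℝ) (hC : 0 ≤ C)
    (I : Set ℕ) (hI : I.Infinite)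
    (hcount : ∀ n ∈ I,
      (d ^ n : ℝ) <
        (({r : FreeGroup α | r ∈ R ∧ (n : ℝ) - C ≤ (wordLength r : ℝ) ∧ wordLength r ≤ n}).ncard : ℝ)) :
    HasExpManyFatBigons
      (cayleyGraph (PresentedGroup R) (Set.range (PresentedGroup.of : α → PresentedGroup R))) 1 := by
  have h1 : (1 : FreeGroup α) ∉ R := by
    obtain ⟨n, hn⟩ := hI.nonempty
    have h := hcount n hn
    have h2 : 1 < {r : FreeGroup α | r ∈ R ∧ (n : ℝ) - C ≤ (wordLength r : ℝ) ∧
        wordLength r ≤ n}.ncard := by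
      exact_mod_cast (one_le_pow₀ hd.le).trans_lt h
    obtain ⟨r, hr, hne⟩ := Set.exists_ne_of_one_lt_ncard h2 1
    exact FatBigon.one_notMem hsc hr.1 hne
  have hSC := FatBigon.isSC hred hsc h1
  refine ⟨0, d, 2, le_rfl, hd, one_lt_two, fun s hs => ⟨s, hs, ?_⟩⟩
  obtain ⟨N, hN⟩ := exists_nat_ge (C + 2)
  refine (hI.sdiff (Set.finite_lt_nat N)).mono fun n hn => ?_
  have hnN : (N : ℝ) ≤ n := by exact_mod_cast not_lt.1 hn.2
  have hlen : ∀ r ∈ {r : FreeGroup α | r ∈ R ∧ (n : ℝ) - C ≤ (wordLength r : ℝ) ∧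
      wordLength r ≤ n}, 2 ≤ wordLength r := by
    rintro r ⟨-, h, -⟩
    exact_mod_cast (by linarith : (2 : ℝ) ≤ wordLength r)
  refine (hcount n hn.1).le.trans (Nat.cast_le.2 ?_)
  refine Set.ncard_le_ncard_of_injOn (FatBigon.antipode R) (fun r hr => ⟨?_, ?_⟩) ?_
    ((FatBigon.ball_finite n).subset Set.inter_subset_right)
  · exact FatBigon.isBigonAt_antipode hSC hr.1 (hlen r hr) s
  · change (FatBigon.cay R).dist 1 _ ≤ n
    rw [FatBigon.dist_antipode hSC hr.1]
    have := hr.2.2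
    omega
  · intro r hr r' hr' h
    exact FatBigon.antipode_inj hSC hdistinct hr.1 hr'.1 (hlen r' hr') h
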